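/- Generalized Neumann integral: for every integer n ≥ 0, every ν ∈ ℂ∖ℤ with Re(ν − n) > −1, and every x with −1 < x < 1, the Cauchy principal value P∫_{−1}^1 (1+ξ)^{ν−n} P_ν(ξ) / (2(x−ξ)) dξ equals (1+x)^{ν−n} Q_ν(x). -/

import Mathlib

open Real MeasureTheory intervalIntegral Filter Topology

/-- Legendre function of the first kind of complex degree `ν`, defined on `(-1, 1]`
via the Mehler–Dirichlet integral. -/
noncomputable def legendreP (ν : ℂ) (x : ℝ) : ℂ :=
  if x = 1 then 1
  else ((2 / π : ℝ) : ℂ) *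
    ∫ β in (0:ℝ)..(Real.arccos x),
      Complex.cos ((2*ν + 1) * (β:ℂ) / 2) / ((Real.sqrt (2 * (Real.cos β - x)) : ℝ) : ℂ)

/-- Legendre function of the second kind of non-integer complex degree `ν` on `(-1,1)`. -/
noncomputable def legendreQ (ν : ℂ) (x : ℝ) : ℂ :=
  ((π:ℝ) : ℂ) / (2 * Complex.sin (ν * (π:ℂ))) *
    (Complex.cos (ν * (π:ℂ)) * legendreP ν x - legendreP ν (-x))

/-!
Off the cut, the Cauchy transform of `(1 + ξ) ^ (ν - n) * P_ν(ξ)` has a closed form. Inserting the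
Mehler-Dirichlet integral and exchanging integrals turns the angular integral into a Cauchy
integral over the unit circle, whose boundary singularity at `-1` is integrable because
`-1 < Re (ν - n)`; its value at the pole inside the disc leaves `2 ^ (ν + 1) * (1 + z) ^ (-n - 1)`
times the Euler integral `eulerIntegral ν z`, which no longer involves `n`. On the cut, the Euler
integral splits into a Mehler integral over an imaginary half-line of angles and one over real
angles, and contour integration over a half-strip shows that the limits at the two sides of the
cut add up to `2 * Q_ν`, up to the same elementary factor. By the Sokhotski-Plemelj formula the
principal value is the mean of the two limits.
-/

/-! ### Integrability of algebraic singularities -/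

lemma intervalIntegrable_abs_sub_rpow {r : ℝ} (hr : -1 < r) (c a b : ℝ) :
    IntervalIntegrable (fun t : ℝ => |t - c| ^ r) volume a b := by
  have habs : ∀ d, IntervalIntegrable (fun t : ℝ => |t| ^ r) volume 0 d := by
    intro d
    rcases le_total 0 d with hd | hd
    · refine (intervalIntegrable_rpow' hr (a := 0) (b := d)).congr fun t ht => ?_
      rw [Set.uIoc_of_le hd] at ht
      simp only [abs_of_pos ht.1]
    · have hneg := (intervalIntegrable_rpow' hr (a := -0) (b := -d)).comp_sub_left 0
      simp only [zero_sub, neg_neg, sub_zero, neg_zero] at hneg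
      refine hneg.congr fun t ht => ?_
      rw [Set.uIoc_of_ge hd] at ht
      simp only [abs_of_nonpos ht.2]
  have := ((habs (a - c)).symm.trans (habs (b - c))).comp_sub_right c
  simpa only [sub_add_cancel] using this

lemma integrableOn_Ioo_abs_sub_rpow {r : ℝ} (hr : -1 < r) (c a b : ℝ) :
    IntegrableOn (fun t : ℝ => |t - c| ^ r) (Set.Ioo a b) :=
  ((intervalIntegrable_abs_sub_rpow hr c a b).1).mono_set Set.Ioo_subset_Ioc_self

lemma integrableOn_Ioo_abs_sub_rpow_mul_abs_sub_rpow {p q : ℝ} (hp : -1 < p) (hq : -1 < q)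
    (a b : ℝ) : IntegrableOn (fun t : ℝ => |t - a| ^ p * |t - b| ^ q) (Set.Ioo a b) := by
  rcases le_or_gt b a with hab | hab
  · rw [Set.Ioo_eq_empty (not_lt.mpr hab)]
    exact integrableOn_empty
  have hcont : ∀ {c d e r : ℝ}, e ∉ Set.Icc c d →
      ContinuousOn (fun t : ℝ => |t - e| ^ r) (Set.Icc c d) := fun he =>
    ContinuousOn.rpow_const (by fun_prop) fun t ht =>
      Or.inl (abs_ne_zero.mpr (sub_ne_zero.mpr fun h => he (h ▸ ht)))
  obtain ⟨m, ham, hmb⟩ := exists_between hab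
  have hIcc : ∀ {c d e r : ℝ}, -1 < r → IntegrableOn (fun t : ℝ => |t - e| ^ r) (Set.Icc c d) :=
    fun hr => Iff.mpr integrableOn_Icc_iff_integrableOn_Ioc
      (intervalIntegrable_abs_sub_rpow hr _ _ _).1
  have hleft : IntegrableOn (fun t : ℝ => |t - a| ^ p * |t - b| ^ q) (Set.Icc a m) :=
    (hIcc hp).mul_continuousOn (hcont fun h => hmb.not_ge h.2) isCompact_Icc
  have hright : IntegrableOn (fun t : ℝ => |t - a| ^ p * |t - b| ^ q) (Set.Icc m b) :=
    (hIcc hq).continuousOn_mul (hcont fun h => ham.not_ge h.1) isCompact_Icc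
  refine (hleft.union hright).mono_set ?_
  rw [Set.Icc_union_Icc_eq_Icc ham.le hmb.le]
  exact Set.Ioo_subset_Icc_self

lemma one_div_sqrt_eq_rpow (r : ℝ) : 1 / √r = r ^ (-1 / 2 : ℝ) := by
  rcases le_or_gt 0 r with hr | hr
  · rw [show (-1 / 2 : ℝ) = -(1 / 2) by norm_num, rpow_neg hr, ← sqrt_eq_rpow, one_div]
  · rw [sqrt_eq_zero_of_nonpos hr.le, rpow_def_of_neg hr,
      show (-1 / 2 : ℝ) * π = -(π / 2) by ring, cos_neg, cos_pi_div_two, mul_zero, div_zero]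

lemma exists_mul_abs_sub_le_abs_cos_sub_cos {θ : ℝ} (hθ : θ ∈ Set.Ioo 0 π) :
    ∃ m > 0, ∀ a ∈ Set.Icc 0 π, m * |a - θ| ≤ |cos a - cos θ| := by
  obtain ⟨hθ0, hθπ⟩ := hθ
  set m := min (sin (θ / 2)) (sin ((π + θ) / 2))
  have hm0 : 0 < m := lt_min (sin_pos_of_pos_of_lt_pi (by linarith) (by linarith))
    (sin_pos_of_pos_of_lt_pi (by linarith) (by linarith))
  refine ⟨m * (2 / π), by positivity, fun a ha => ?_⟩
  have hsum : m ≤ |sin ((a + θ) / 2)| :=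
    (strictConcaveOn_sin_Icc.concaveOn.min_le_of_mem_Icc
      ⟨by linarith, by linarith⟩ ⟨by linarith, by linarith⟩
      ⟨by linarith [ha.1], by linarith [ha.2]⟩).trans (le_abs_self _)
  have hdiff : 2 / π * |(a - θ) / 2| ≤ |sin ((a - θ) / 2)| := mul_abs_le_abs_sin <| by
    rw [abs_le]
    constructor <;> linarith [ha.1, ha.2]
  rw [cos_sub_cos, abs_mul, abs_mul, abs_neg, abs_two]
  calc m * (2 / π) * |a - θ| = 2 * (m * (2 / π * |(a - θ) / 2|)) := by
        rw [abs_div, abs_two]; ring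
    _ ≤ 2 * (|sin ((a + θ) / 2)| * |sin ((a - θ) / 2)|) := by gcongr
    _ = 2 * |sin ((a + θ) / 2)| * |sin ((a - θ) / 2)| := by ring

lemma integrableOn_two_mul_abs_cos_sub_rpow {x : ℝ} (hx : x ∈ Set.Ioo (-1) 1) :
    IntegrableOn (fun a : ℝ => (2 * |cos a - x|) ^ (-1 / 2 : ℝ)) (Set.Ioo 0 π) := by
  have hθ : arccos x ∈ Set.Ioo 0 π := ⟨arccos_pos.mpr hx.2, arccos_lt_pi.mpr hx.1⟩
  obtain ⟨m, hm, hlower⟩ := exists_mul_abs_sub_le_abs_cos_sub_cos hθ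
  rw [cos_arccos hx.1.le hx.2.le] at hlower
  refine Integrable.mono' ((integrableOn_Ioo_abs_sub_rpow (r := -1 / 2) (by norm_num)
    (arccos x) 0 π).const_mul ((2 * m) ^ (-1 / 2 : ℝ)))
    (by fun_prop : Measurable fun a : ℝ => (2 * |cos a - x|) ^ (-1 / 2 : ℝ)).aestronglyMeasurable ?_
  have hne : ∀ᵐ a ∂(volume.restrict (Set.Ioo (0 : ℝ) π)), a ≠ arccos x :=
    ae_restrict_of_ae (Measure.ae_ne volume _)
  filter_upwards [hne, ae_restrict_mem measurableSet_Ioo] with a ha hmem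
  have : 0 < |a - arccos x| := abs_pos.mpr (sub_ne_zero.mpr ha)
  rw [norm_of_nonneg (by positivity), ← mul_rpow (by positivity) (abs_nonneg _)]
  refine rpow_le_rpow_of_nonpos (by positivity) ?_ (by norm_num)
  linarith [hlower a ⟨hmem.1.le, hmem.2.le⟩]

/-! ### Principal values as limits of odd regularisations -/

/-- A family `K ε`, `ε > 0`, of bounded odd kernels which are dominated by `1 / |y|` and converge to
`1 / y` as `ε → 0⁺`. All such families compute the same principal value. -/
structure IsOddRegularization (K : ℝ → ℝ → ℝ) : Prop where
  measurable : ∀ ε > 0, Measurable (K ε)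
  odd : ∀ ε > 0, Function.Odd (K ε)
  abs_le_inv_abs : ∀ ε > 0, ∀ y, |K ε y| ≤ |y|⁻¹
  abs_le_inv : ∀ ε > 0, ∀ y, |K ε y| ≤ ε⁻¹
  tendsto_inv : ∀ y ≠ 0, Tendsto (fun ε => K ε y) (𝓝[>] 0) (𝓝 y⁻¹)

lemma isOddRegularization_conjPoisson :
    IsOddRegularization fun ε y => y / (y ^ 2 + ε ^ 2) where
  measurable _ _ := by fun_prop
  odd _ _ y := by simp only [neg_sq, neg_div]
  abs_le_inv_abs ε hε y := by
    rcases eq_or_ne y 0 with rfl | hy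
    · simp
    rw [abs_div, abs_of_pos (by positivity : 0 < y ^ 2 + ε ^ 2), inv_eq_one_div,
      div_le_div_iff₀ (by positivity) (abs_pos.mpr hy)]
    nlinarith [sq_abs y, sq_nonneg ε]
  abs_le_inv ε hε y := by
    rw [abs_div, abs_of_pos (by positivity : 0 < y ^ 2 + ε ^ 2), inv_eq_one_div,
      div_le_div_iff₀ (by positivity) hε]
    nlinarith [sq_abs y, sq_nonneg (|y| - ε), sq_nonneg ε]
  tendsto_inv y hy := by
    have hcont : ContinuousAt (fun ε : ℝ => y / (y ^ 2 + ε ^ 2)) 0 := by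
      fun_prop (disch := positivity)
    have hval : y / (y ^ 2 + 0 ^ 2) = y⁻¹ := by field_simp; ring
    exact hval ▸ hcont.tendsto.mono_left nhdsWithin_le_nhds

lemma isOddRegularization_truncated :
    IsOddRegularization fun ε y => if ε < |y| then y⁻¹ else 0 where
  measurable _ _ :=
    Measurable.ite (measurableSet_lt measurable_const (by fun_prop)) measurable_inv measurable_const
  odd _ _ y := by
    simp only [abs_neg, inv_neg]
    split_ifs <;> simp
  abs_le_inv_abs _ _ y := by
    split_ifs <;> simp [abs_inv]
  abs_le_inv ε hε y := by
    split_ifs with h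
    · rw [abs_inv]
      gcongr
    · simpa using hε.le
  tendsto_inv y hy := by
    refine tendsto_const_nhds.congr' ?_
    filter_upwards [mem_nhdsWithin_of_mem_nhds (Iio_mem_nhds (abs_pos.mpr hy))] with ε hε
    rw [if_pos (Set.mem_Iio.mp hε)]

lemma integrableOn_inv_abs_sub_mul_norm {E : Type*} [NormedAddCommGroup E]
    {f : ℝ → E} {x : ℝ} {s : Set ℝ} (hs : volume s ≠ ⊤) (hf : IntegrableOn f s) {C ρ : ℝ}
    (hρ : 0 < ρ) (hC : ∀ ξ ∈ Set.Ioo (x - ρ) (x + ρ), ‖f ξ‖ ≤ C * |x - ξ|) :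
    IntegrableOn (fun ξ => |x - ξ|⁻¹ * ‖f ξ‖) s := by
  refine ((integrableOn_const hs (C := |C|)).add (hf.norm.const_mul ρ⁻¹)).mono'
    ((by fun_prop : Measurable fun ξ => |x - ξ|⁻¹).aestronglyMeasurable.mul
      hf.norm.aestronglyMeasurable) (Eventually.of_forall fun ξ => ?_)
  rw [norm_of_nonneg (by positivity)]
  by_cases hξ : ξ ∈ Set.Ioo (x - ρ) (x + ρ)
  · refine le_add_of_le_of_nonneg (inv_mul_le_of_le_mul₀ (abs_nonneg _) (abs_nonneg _) ?_)
      (by positivity)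
    exact (hC ξ hξ).trans (by rw [mul_comm]; gcongr; exact le_abs_self C)
  · have : ρ ≤ |x - ξ| := by
      contrapose! hξ
      rw [abs_lt] at hξ
      constructor <;> linarith
    exact le_add_of_nonneg_of_le (abs_nonneg C)
      (mul_le_mul_of_nonneg_right (inv_anti₀ hρ this) (norm_nonneg _))

section

variable {E : Type*} [NormedAddCommGroup E] [NormedSpace ℝ E] {f : ℝ → E} {a b x : ℝ}

lemma exists_Ioo_norm_sub_le_of_differentiableAt (hf : DifferentiableAt ℝ f x)
    (hx : x ∈ Set.Ioo a b) : ∃ ρ > 0, Set.Ioo (x - ρ) (x + ρ) ⊆ Set.Ioo a b ∧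
      ∃ C, ∀ ξ ∈ Set.Ioo (x - ρ) (x + ρ), ‖f ξ - f x‖ ≤ C * |x - ξ| := by
  obtain ⟨C, hC⟩ := hf.isBigO_sub.bound
  obtain ⟨ρ, hρ, hball⟩ := Metric.mem_nhds_iff.mp (inter_mem hC (isOpen_Ioo.mem_nhds hx))
  rw [Real.ball_eq_Ioo] at hball
  refine ⟨ρ, hρ, fun ξ hξ => (hball hξ).2, C, fun ξ hξ => ?_⟩
  rw [abs_sub_comm]
  exact (hball hξ).1

lemma IsOddRegularization.integral_eq_zero {K : ℝ → ℝ → ℝ} (hK : IsOddRegularization K)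
    {ε ρ : ℝ} (hε : 0 < ε) (hρ : 0 < ρ) : ∫ ξ in Set.Ioo (x - ρ) (x + ρ), K ε (x - ξ) = 0 := by
  rw [← integral_Ioc_eq_integral_Ioo, ← integral_of_le (by linarith),
    intervalIntegral.integral_comp_sub_left (K ε) x, sub_add_cancel_left, sub_sub_cancel]
  have hodd : ∫ y in (-ρ)..ρ, K ε y = -∫ y in (-ρ)..ρ, K ε y := by
    conv_lhs => rw [← neg_neg ρ, ← intervalIntegral.integral_comp_neg, neg_neg]
    rw [← intervalIntegral.integral_neg]
    exact intervalIntegral.integral_congr fun y _ => hK.odd ε hε y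
  linarith

lemma IsOddRegularization.aestronglyMeasurable_comp_sub {K : ℝ → ℝ → ℝ}
    (hK : IsOddRegularization K) {ε : ℝ} (hε : 0 < ε) (μ : Measure ℝ) :
    AEStronglyMeasurable (fun ξ => K ε (x - ξ)) μ :=
  ((hK.measurable ε hε).comp (measurable_const.sub measurable_id)).aestronglyMeasurable

lemma IsOddRegularization.integrableOn_smul {K : ℝ → ℝ → ℝ} (hK : IsOddRegularization K)
    {ε : ℝ} (hε : 0 < ε) {s : Set ℝ} (hf : IntegrableOn f s) :
    IntegrableOn (fun ξ => K ε (x - ξ) • f ξ) s :=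
  hf.bdd_smul _ (hK.aestronglyMeasurable_comp_sub hε _)
    (Eventually.of_forall fun _ => hK.abs_le_inv ε hε _)

lemma IsOddRegularization.tendsto_integral_smul {K : ℝ → ℝ → ℝ} (hK : IsOddRegularization K)
    {s : Set ℝ} (hf : IntegrableOn f s) (hf' : IntegrableOn (fun ξ => |x - ξ|⁻¹ * ‖f ξ‖) s) :
    Tendsto (fun ε => ∫ ξ in s, K ε (x - ξ) • f ξ) (𝓝[>] 0) (𝓝 (∫ ξ in s, (x - ξ)⁻¹ • f ξ)) := by
  refine tendsto_integral_filter_of_dominated_convergence _ ?_ ?_ hf' ?_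
  · filter_upwards [self_mem_nhdsWithin] with ε hε
    exact (hK.aestronglyMeasurable_comp_sub hε _).smul hf.aestronglyMeasurable
  · filter_upwards [self_mem_nhdsWithin] with ε hε
    refine Eventually.of_forall fun ξ => (norm_smul_le _ _).trans ?_
    gcongr
    exact hK.abs_le_inv_abs ε hε _
  · filter_upwards [ae_restrict_of_ae (Measure.ae_ne volume x)] with ξ hξ
    exact (hK.tendsto_inv _ (sub_ne_zero.mpr hξ.symm)).smul_const _

-- The odd kernels do not see the constant `f x`, subtracted on an interval centred at `x`.
lemma exists_tendsto_integral_of_isOddRegularization [CompleteSpace E]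
    (hf : IntegrableOn f (Set.Ioo a b)) (hd : DifferentiableAt ℝ f x) (hx : x ∈ Set.Ioo a b) :
    ∃ A : E, ∀ K, IsOddRegularization K →
      Tendsto (fun ε => ∫ ξ in Set.Ioo a b, K ε (x - ξ) • f ξ) (𝓝[>] 0) (𝓝 A) := by
  obtain ⟨ρ, hρ, hsub, C, hC⟩ := exists_Ioo_norm_sub_le_of_differentiableAt hd hx
  set I := Set.Ioo (x - ρ) (x + ρ)
  set c : ℝ → E := I.indicator fun _ => f x with hc
  have hc_int : IntegrableOn c (Set.Ioo a b) :=
    (integrable_indicator_iff measurableSet_Ioo).mpr (integrableOn_const (by simp)) |>.integrableOn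
  have hfc_int : IntegrableOn (fun ξ => |x - ξ|⁻¹ * ‖f ξ - c ξ‖) (Set.Ioo a b) :=
    integrableOn_inv_abs_sub_mul_norm (by simp) (hf.sub hc_int) hρ fun ξ hξ => by
      rw [hc, Set.indicator_of_mem hξ]
      exact hC ξ hξ
  refine ⟨∫ ξ in Set.Ioo a b, (x - ξ)⁻¹ • (f ξ - c ξ), fun K hK => ?_⟩
  refine (hK.tendsto_integral_smul (hf.sub hc_int) hfc_int).congr' ?_
  filter_upwards [self_mem_nhdsWithin] with ε hε
  have hzero : ∫ ξ in Set.Ioo a b, K ε (x - ξ) • c ξ = 0 := by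
    simp_rw [hc, ← Set.indicator_smul_apply I fun ξ => K ε (x - ξ)]
    rw [setIntegral_indicator measurableSet_Ioo, Set.inter_eq_self_of_subset_right hsub,
      _root_.integral_smul_const, hK.integral_eq_zero hε hρ, zero_smul]
  simp only [Pi.sub_apply, smul_sub]
  rw [integral_sub (hK.integrableOn_smul hε hf) (hK.integrableOn_smul hε hc_int), hzero, sub_zero]

end

lemma norm_inv_sub_ofReal_le {z : ℂ} (hz : z.im ≠ 0) (t : ℝ) : ‖(z - t)⁻¹‖ ≤ |z.im|⁻¹ := by
  rw [norm_inv]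
  exact inv_anti₀ (abs_pos.mpr hz) (by simpa using Complex.abs_im_le_norm (z - t))

lemma integrableOn_div_sub_ofReal {f : ℝ → ℂ} {s : Set ℝ} (hf : IntegrableOn f s) {z : ℂ}
    (hz : z.im ≠ 0) : IntegrableOn (fun ξ : ℝ => f ξ / (z - ξ)) s := by
  simp_rw [div_eq_mul_inv]
  exact hf.mul_bdd (c := |z.im|⁻¹)
    (by fun_prop : Measurable fun ξ : ℝ => (z - (ξ : ℂ))⁻¹).aestronglyMeasurable
    (Eventually.of_forall fun ξ => norm_inv_sub_ofReal_le hz ξ)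

lemma sub_ofReal_ne_zero {z : ℂ} (hz : z.im ≠ 0) (ξ : ℝ) : z - ξ ≠ 0 := fun h =>
  hz (by simpa using congrArg Complex.im h)

lemma integral_div_add_integral_div_eq_conjPoisson {f : ℝ → ℂ} {s : Set ℝ}
    (hf : IntegrableOn f s) (x : ℝ) {δ : ℝ} (hδ : 0 < δ) :
    (∫ ξ in s, f ξ / (x + δ * Complex.I - ξ)) + ∫ ξ in s, f ξ / (x - δ * Complex.I - ξ) =
      2 * ∫ ξ in s, ((x - ξ) / ((x - ξ) ^ 2 + δ ^ 2)) • f ξ := by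
  have him₁ : ((x : ℂ) + δ * Complex.I).im ≠ 0 := by simpa using hδ.ne'
  have him₂ : ((x : ℂ) - δ * Complex.I).im ≠ 0 := by simpa using hδ.ne'
  rw [← integral_add (integrableOn_div_sub_ofReal hf him₁) (integrableOn_div_sub_ofReal hf him₂),
    ← MeasureTheory.integral_const_mul]
  refine integral_congr_ae (Eventually.of_forall fun ξ => ?_)
  have hprod : ((x : ℂ) - ξ) ^ 2 + (δ : ℂ) ^ 2 =
      (x + δ * Complex.I - ξ) * (x - δ * Complex.I - ξ) := by
    linear_combination (δ : ℂ) ^ 2 * Complex.I_sq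
  have hne₁ := sub_ofReal_ne_zero him₁ ξ
  have hne₂ := sub_ofReal_ne_zero him₂ ξ
  simp only [Complex.real_smul]
  push_cast
  rw [hprod]
  field_simp
  ring

theorem tendsto_principalValue_of_tendsto_boundaryValues {f : ℝ → ℂ} {a b x : ℝ} {A : ℂ}
    (hf : IntegrableOn f (Set.Ioo a b)) (hd : DifferentiableAt ℝ f x) (hx : x ∈ Set.Ioo a b)
    (hA : Tendsto (fun δ : ℝ => (∫ ξ in Set.Ioo a b, f ξ / (x + δ * Complex.I - ξ)) +
      ∫ ξ in Set.Ioo a b, f ξ / (x - δ * Complex.I - ξ)) (𝓝[>] 0) (𝓝 (2 * A))) :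
    Tendsto (fun ε : ℝ => ∫ ξ in {ξ | ξ ∈ Set.Ioo a b ∧ ε < |ξ - x|}, f ξ / ((x - ξ : ℝ) : ℂ))
      (𝓝[>] 0) (𝓝 A) := by
  obtain ⟨B, hB⟩ := exists_tendsto_integral_of_isOddRegularization hf hd hx
  have hBA : B = A := by
    refine mul_left_cancel₀ two_ne_zero (tendsto_nhds_unique (Tendsto.congr' ?_
      ((hB _ isOddRegularization_conjPoisson).const_mul 2)) hA)
    filter_upwards [self_mem_nhdsWithin] with δ hδ
    exact (integral_div_add_integral_div_eq_conjPoisson hf x hδ).symm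
  refine (hBA ▸ hB _ isOddRegularization_truncated).congr fun ε => ?_
  have hmeas : MeasurableSet {ξ : ℝ | ε < |ξ - x|} :=
    measurableSet_lt measurable_const (by fun_prop)
  change _ = ∫ ξ in Set.Ioo a b ∩ {ξ : ℝ | ε < |ξ - x|}, _
  rw [← setIntegral_indicator hmeas]
  refine integral_congr_ae (Eventually.of_forall fun ξ => ?_)
  simp only [Set.indicator, Set.mem_ofPred_eq, abs_sub_comm x ξ]
  split_ifs
  · rw [Complex.real_smul, Complex.ofReal_inv, inv_mul_eq_div]
  · rw [zero_smul]

/-! ### Smoothness of the Legendre function -/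

lemma differentiableAt_integral_comp_mul {E : Type*} [NormedAddCommGroup E] [NormedSpace ℝ E]
    {G : ℝ → E} {r k : ℝ} (hG : ContDiffOn ℝ 1 G (Set.Ioo (-r) r)) (hk : |k| < r) {s : ℝ → ℝ}
    (hs : Continuous s) (hs₁ : ∀ φ, |s φ| ≤ 1) (a b : ℝ) :
    DifferentiableAt ℝ (fun k => ∫ φ in a..b, G (k * s φ)) k := by
  obtain ⟨R, hkR, hRr⟩ := exists_between hk
  have hmem : ∀ {l : ℝ}, |l| < R → ∀ φ, l * s φ ∈ Set.Icc (-R) R := fun hl φ => by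
    rw [Set.mem_Icc, ← abs_le, abs_mul]
    exact (mul_le_of_le_one_right (abs_nonneg _) (hs₁ φ)).trans hl.le
  have hsub : Set.Icc (-R) R ⊆ Set.Ioo (-r) r := Set.Icc_subset_Ioo (neg_lt_neg hRr) hRr
  have hG' : ContinuousOn (deriv G) (Set.Icc (-R) R) :=
    (hG.continuousOn_deriv_of_isOpen isOpen_Ioo le_rfl).mono hsub
  have hcont : ∀ {l : ℝ}, |l| < R → Continuous fun φ => G (l * s φ) := fun hl =>
    (hG.continuousOn.mono hsub).comp_continuous (by fun_prop) (hmem hl)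
  have hcont' : Continuous fun φ => s φ • deriv G (k * s φ) :=
    hs.smul (hG'.comp_continuous (by fun_prop) (hmem hkR))
  obtain ⟨C, hC⟩ := isCompact_Icc.exists_bound_of_continuousOn hG'
  have hnhds : {l : ℝ | |l| < R} ∈ 𝓝 k := (isOpen_lt continuous_abs continuous_const).mem_nhds hkR
  refine (hasDerivAt_integral_of_dominated_loc_of_deriv_le
    (F' := fun l φ => s φ • deriv G (l * s φ)) (bound := fun _ => C) hnhds
    (eventually_of_mem hnhds fun l hl => (hcont hl).aestronglyMeasurable)
    ((hcont hkR).intervalIntegrable _ _) hcont'.aestronglyMeasurable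
    (Eventually.of_forall fun φ _ l hl => ?_) intervalIntegrable_const
    (Eventually.of_forall fun φ _ l hl => ?_)).2.differentiableAt
  · rw [norm_smul]
    exact (mul_le_of_le_one_left (norm_nonneg _) (hs₁ φ)).trans (hC _ (hmem hl φ))
  · have hd : HasDerivAt G (deriv G (l * s φ)) (l * s φ) :=
      ((hG.differentiableOn one_ne_zero).differentiableAt
        (isOpen_Ioo.mem_nhds (hsub (hmem hl φ)))).hasDerivAt
    exact hd.scomp l (by simpa using (hasDerivAt_id l).mul_const (s φ))

/-- The integrand of the Mehler–Dirichlet integral after the substitution `sin (β / 2) = u`. -/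
noncomputable def mehlerArcsin (ν : ℂ) (u : ℝ) : ℂ :=
  Complex.cos ((2 * ν + 1) * (arcsin u : ℂ)) / (√(1 - u ^ 2) : ℂ)

lemma contDiffOn_mehlerArcsin (ν : ℂ) : ContDiffOn ℝ 1 (mehlerArcsin ν) (Set.Ioo (-1) 1) := by
  intro u hu
  have hpos : 0 < 1 - u ^ 2 := by nlinarith [hu.1, hu.2]
  have harcsin : ContDiffAt ℝ 1 (fun u : ℝ => (arcsin u : ℂ)) u :=
    Complex.ofRealCLM.contDiff.contDiffAt.comp u (contDiffAt_arcsin hu.1.ne' hu.2.ne)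
  have hsqrt : ContDiffAt ℝ 1 (fun u : ℝ => (√(1 - u ^ 2) : ℂ)) u :=
    Complex.ofRealCLM.contDiff.contDiffAt.comp u (ContDiffAt.sqrt (by fun_prop) hpos.ne')
  have hcos : ContDiff ℝ 1 Complex.cos := Complex.contDiff_cos.restrict_scalars ℝ
  have hnum : ContDiffAt ℝ 1 (fun u : ℝ => Complex.cos ((2 * ν + 1) * (arcsin u : ℂ))) u :=
    hcos.contDiffAt.comp u (contDiffAt_const.mul harcsin)
  have hne : (√(1 - u ^ 2) : ℂ) ≠ 0 := by exact_mod_cast (sqrt_pos.mpr hpos).ne'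
  exact (hnum.mul (hsqrt.inv hne)).contDiffWithinAt

lemma mul_sin_mem_Icc {k φ : ℝ} (hk : 0 ≤ k) (hφ : φ ∈ Set.Icc 0 (π / 2)) :
    k * sin φ ∈ Set.Icc 0 k :=
  ⟨mul_nonneg hk (sin_nonneg_of_nonneg_of_le_pi hφ.1 (by linarith [hφ.2, pi_pos])),
    mul_le_of_le_one_right hk (sin_le_one φ)⟩

lemma strictMonoOn_two_mul_arcsin_mul_sin {k : ℝ} (hk₀ : 0 < k) (hk₁ : k < 1) :
    StrictMonoOn (fun φ => 2 * arcsin (k * sin φ)) (Set.Icc 0 (π / 2)) := by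
  have hmaps : Set.MapsTo (fun φ => k * sin φ) (Set.Icc 0 (π / 2)) (Set.Icc (-1) 1) :=
    fun φ hφ => Set.Icc_subset_Icc (by norm_num) hk₁.le (mul_sin_mem_Icc hk₀.le hφ)
  have hsin : StrictMonoOn (fun φ => k * sin φ) (Set.Icc 0 (π / 2)) :=
    (strictMono_mul_left_of_pos hk₀).comp_strictMonoOn
      (strictMonoOn_sin.mono (Set.Icc_subset_Icc_left (by linarith [pi_div_two_pos])))
  exact (strictMono_mul_left_of_pos two_pos).comp_strictMonoOn (strictMonoOn_arcsin.comp hsin hmaps)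

lemma cos_two_mul_arcsin {k : ℝ} (hk : k ∈ Set.Icc (-1) 1) :
    cos (2 * arcsin k) = 1 - 2 * k ^ 2 := by
  rw [cos_two_mul, cos_sq', sin_arcsin hk.1 hk.2]
  ring

lemma arccos_eq_two_mul_arcsin {x : ℝ} (hx : x ∈ Set.Ioo (-1) 1) :
    arccos x = 2 * arcsin √((1 - x) / 2) := by
  have hk : √((1 - x) / 2) ∈ Set.Icc (-1) 1 :=
    ⟨by linarith [sqrt_nonneg ((1 - x) / 2)], sqrt_le_one.mpr (by linarith [hx.1])⟩
  have hcos : cos (2 * arcsin √((1 - x) / 2)) = x := by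
    rw [cos_two_mul_arcsin hk, sq_sqrt (by linarith [hx.2])]
    ring
  conv_lhs => rw [← hcos]
  refine arccos_cos ?_ ?_
  · linarith [arcsin_nonneg.mpr (sqrt_nonneg ((1 - x) / 2))]
  · linarith [arcsin_le_pi_div_two √((1 - x) / 2)]

lemma image_Ioo_two_mul_arcsin_mul_sin {x : ℝ} (hx : x ∈ Set.Ioo (-1) 1) :
    (fun φ => 2 * arcsin (√((1 - x) / 2) * sin φ)) '' Set.Ioo 0 (π / 2) =
      Set.Ioo 0 (arccos x) := by
  have hcont : ContinuousOn (fun φ => 2 * arcsin (√((1 - x) / 2) * sin φ))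
    (Set.Icc 0 (π / 2)) := by fun_prop
  have hk₀ : 0 < √((1 - x) / 2) := sqrt_pos.mpr (by linarith [hx.2])
  have hk₁ : √((1 - x) / 2) < 1 := (sqrt_lt' one_pos).mpr (by linarith [hx.1])
  rw [hcont.image_Ioo_of_strictMonoOn (by positivity)
    (strictMonoOn_two_mul_arcsin_mul_sin hk₀ hk₁), arccos_eq_two_mul_arcsin hx]
  simp

lemma legendreP_eq_integral_mehlerArcsin (ν : ℂ) {x : ℝ} (hx : x ∈ Set.Ioo (-1) 1) :
    legendreP ν x = ((2 / π : ℝ) : ℂ) *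
      ∫ φ in 0..(π / 2), mehlerArcsin ν (√((1 - x) / 2) * sin φ) := by
  have himage := image_Ioo_two_mul_arcsin_mul_sin hx
  rw [legendreP, if_neg hx.2.ne, integral_of_le (arccos_nonneg x), integral_of_le (by positivity),
    integral_Ioc_eq_integral_Ioo, integral_Ioc_eq_integral_Ioo, ← himage]
  set k := √((1 - x) / 2)
  have hk₀ : 0 < k := sqrt_pos.mpr (by linarith [hx.2])
  have hk₁ : k < 1 := (sqrt_lt' one_pos).mpr (by linarith [hx.1])
  have hk_sq : k ^ 2 = (1 - x) / 2 := sq_sqrt (by linarith [hx.2])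
  have hsin : ∀ φ ∈ Set.Ioo 0 (π / 2), k * sin φ ∈ Set.Ioo (-1) 1 := fun φ hφ =>
    Set.Icc_subset_Ioo (by norm_num) hk₁ (mul_sin_mem_Icc hk₀.le (Set.Ioo_subset_Icc_self hφ))
  have hderiv : ∀ φ ∈ Set.Ioo 0 (π / 2), HasDerivWithinAt (fun φ => 2 * arcsin (k * sin φ))
      (2 * (1 / √(1 - (k * sin φ) ^ 2) * (k * cos φ))) (Set.Ioo 0 (π / 2)) φ := fun φ hφ =>
    ((HasDerivAt.comp φ (hasDerivAt_arcsin (hsin φ hφ).1.ne' (hsin φ hφ).2.ne)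
      ((hasDerivAt_sin φ).const_mul k)).const_mul 2).hasDerivWithinAt
  rw [integral_image_eq_integral_abs_deriv_smul measurableSet_Ioo hderiv
    ((strictMonoOn_two_mul_arcsin_mul_sin hk₀ hk₁).injOn.mono Set.Ioo_subset_Icc_self)]
  congr 1
  refine setIntegral_congr_fun measurableSet_Ioo fun φ hφ => ?_
  have hcos : 0 < cos φ := cos_pos_of_mem_Ioo ⟨by linarith [hφ.1, pi_pos], hφ.2⟩
  have hpos : 0 < 1 - (k * sin φ) ^ 2 := by nlinarith [(hsin φ hφ).1, (hsin φ hφ).2]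
  have hsqrt : √(2 * (cos (2 * arcsin (k * sin φ)) - x)) = 2 * (k * cos φ) := by
    rw [cos_two_mul_arcsin (Set.Ioo_subset_Icc_self (hsin φ hφ)), ← sqrt_sq (by positivity :
      0 ≤ 2 * (k * cos φ)), show x = 1 - 2 * k ^ 2 by linarith]
    congr 1
    linear_combination (-4 * k ^ 2) * sin_sq_add_cos_sq φ
  have hsqrt_ne : (√(1 - (k * sin φ) ^ 2) : ℂ) ≠ 0 := by exact_mod_cast (sqrt_pos.mpr hpos).ne'
  have hkcos_ne : ((k * cos φ : ℝ) : ℂ) ≠ 0 := by exact_mod_cast (by positivity)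
  simp only [mehlerArcsin]
  rw [hsqrt, abs_of_pos (by positivity), Complex.real_smul, Complex.ofReal_mul 2 (arcsin _),
    Complex.ofReal_ofNat, mul_div_assoc, mul_div_cancel_left₀ _ two_ne_zero]
  generalize √(1 - (k * sin φ) ^ 2) = q at *
  generalize k * cos φ = c at *
  push_cast
  field_simp

lemma differentiableAt_legendreP (ν : ℂ) {x : ℝ} (hx : x ∈ Set.Ioo (-1) 1) :
    DifferentiableAt ℝ (legendreP ν) x := by
  have hk : DifferentiableAt ℝ (fun t => √((1 - t) / 2)) x :=
    DifferentiableAt.sqrt (by fun_prop) (by linarith [hx.2])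
  have hk₁ : |√((1 - x) / 2)| < 1 := by
    rw [abs_of_nonneg (sqrt_nonneg _)]
    exact (sqrt_lt' one_pos).mpr (by linarith [hx.1])
  refine (((differentiableAt_integral_comp_mul (contDiffOn_mehlerArcsin ν) hk₁ continuous_sin
    abs_sin_le_one 0 (π / 2)).comp x hk).const_mul ((2 / π : ℝ) : ℂ)).congr_of_eventuallyEq ?_
  filter_upwards [isOpen_Ioo.mem_nhds hx] with t ht
  exact legendreP_eq_integral_mehlerArcsin ν ht

/-! ### Mehler integrals and contour integration over a half-strip -/

/-- The circular Mehler integral: `1 / π` times its values at `±(ν + 1 / 2)` add up to `P_ν`.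
Since `1 / √r = 0` for `r ≤ 0`, the range of integration is effectively `(0, arccos x)`. -/
noncomputable def circularMehler (μ : ℂ) (x : ℝ) : ℂ :=
  ∫ β in Set.Ioo 0 π, Complex.exp (Complex.I * μ * β) * ((1 / √(2 * (cos β - x)) : ℝ) : ℂ)

/-- The hyperbolic Mehler integral, the analogue of `circularMehler` along the imaginary
half-line. -/
noncomputable def hyperbolicMehler (μ : ℂ) (x : ℝ) : ℂ :=
  ∫ y in Set.Ioi (0 : ℝ), Complex.exp (-μ * y) * ((1 / √(2 * (cosh y - x)) : ℝ) : ℂ)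

lemma conj_circularMehler_conj (μ : ℂ) (x : ℝ) :
    starRingEnd ℂ (circularMehler (starRingEnd ℂ μ) x) = circularMehler (-μ) x := by
  rw [circularMehler, circularMehler, ← integral_conj]
  refine integral_congr_ae (Eventually.of_forall fun β => ?_)
  simp [← Complex.exp_conj]

lemma conj_hyperbolicMehler_conj (μ : ℂ) (x : ℝ) :
    starRingEnd ℂ (hyperbolicMehler (starRingEnd ℂ μ) x) = hyperbolicMehler μ x := by
  rw [hyperbolicMehler, hyperbolicMehler, ← integral_conj]
  refine integral_congr_ae (Eventually.of_forall fun β => ?_)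
  simp [← Complex.exp_conj]

lemma norm_exp_I_mul (μ : ℂ) (a y : ℝ) :
    ‖Complex.exp (Complex.I * μ * (a + y * Complex.I))‖ = exp (-(μ.im * a) - μ.re * y) := by
  rw [Complex.norm_exp]
  simp

lemma neg_mul_le_abs_mul_of_mem_Icc {a c : ℝ} (ha : a ∈ Set.Icc 0 c) (t : ℝ) :
    -(t * a) ≤ |t| * c := by
  have := mul_le_mul_of_nonneg_left ha.2 (abs_nonneg t)
  nlinarith [neg_abs_le t, ha.1]

lemma integrableOn_circularMehler (μ : ℂ) {x : ℝ} (hx : x ∈ Set.Ioo (-1) 1) :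
    IntegrableOn (fun β : ℝ => Complex.exp (Complex.I * μ * β) *
      ((1 / √(2 * (cos β - x)) : ℝ) : ℂ)) (Set.Ioo 0 π) := by
  refine Integrable.mono' ((integrableOn_two_mul_abs_cos_sub_rpow hx).const_mul (exp (|μ.im| * π)))
    (by fun_prop : Measurable _).aestronglyMeasurable ?_
  filter_upwards [ae_restrict_mem measurableSet_Ioo] with β hβ
  have hexp : ‖Complex.exp (Complex.I * μ * β)‖ ≤ exp (|μ.im| * π) := by
    have hnorm := norm_exp_I_mul μ β 0
    simp only [Complex.ofReal_zero, zero_mul, add_zero, mul_zero, sub_zero] at hnorm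
    exact hnorm.trans_le (exp_le_exp.mpr
      (neg_mul_le_abs_mul_of_mem_Icc (Set.Ioo_subset_Icc_self hβ) _))
  rw [norm_mul, Complex.norm_real, norm_of_nonneg (by positivity)]
  refine mul_le_mul hexp ?_ (by positivity) (exp_pos _).le
  rcases le_or_gt (cos β - x) 0 with h | h
  · rw [sqrt_eq_zero_of_nonpos (by linarith), div_zero]
    positivity
  · rw [abs_of_pos h, one_div_sqrt_eq_rpow]

lemma one_sub_abs_mul_exp_le_two_mul_cosh_sub {x : ℝ} (hx : |x| ≤ 1) (y : ℝ) :
    (1 - |x|) * exp y ≤ 2 * (cosh y - x) := by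
  have hexp : exp y ≤ 2 * cosh y := by
    rw [cosh_eq]
    linarith [exp_pos (-y)]
  nlinarith [one_le_cosh y, le_abs_self x, abs_nonneg x]

lemma one_div_sqrt_two_mul_cosh_sub_le {x : ℝ} (hx : |x| < 1) (y : ℝ) :
    1 / √(2 * (cosh y - x)) ≤ (1 - |x|) ^ (-1 / 2 : ℝ) * exp (-y / 2) := by
  have hx' : 0 < 1 - |x| := sub_pos.mpr hx
  calc 1 / √(2 * (cosh y - x)) = (2 * (cosh y - x)) ^ (-1 / 2 : ℝ) := one_div_sqrt_eq_rpow _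
    _ ≤ ((1 - |x|) * exp y) ^ (-1 / 2 : ℝ) := rpow_le_rpow_of_nonpos (by positivity)
        (one_sub_abs_mul_exp_le_two_mul_cosh_sub hx.le y) (by norm_num)
    _ = (1 - |x|) ^ (-1 / 2 : ℝ) * exp (-y / 2) := by
        rw [mul_rpow hx'.le (exp_pos _).le, ← exp_mul]
        ring_nf

lemma integrableOn_hyperbolicMehler {μ : ℂ} (hμ : -1 / 2 < μ.re) {x : ℝ}
    (hx : x ∈ Set.Ioo (-1) 1) :
    IntegrableOn (fun y : ℝ => Complex.exp (-μ * y) * ((1 / √(2 * (cosh y - x)) : ℝ) : ℂ))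
      (Set.Ioi 0) := by
  have hmeas : Measurable fun y : ℝ => 1 / √(2 * (cosh y - x)) := by
    have := measurable_cosh
    fun_prop
  refine Integrable.mono' ((exp_neg_integrableOn_Ioi 0 (by linarith : 0 < μ.re + 1 / 2)).const_mul
    ((1 - |x|) ^ (-1 / 2 : ℝ))) ((by fun_prop : Measurable fun y : ℝ =>
      Complex.exp (-μ * y)).mul (Complex.measurable_ofReal.comp hmeas)).aestronglyMeasurable
    (Eventually.of_forall fun y => ?_)
  rw [norm_mul, Complex.norm_exp, Complex.norm_real, norm_of_nonneg (by positivity),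
    show (-μ * (y : ℂ)).re = -μ.re * y by simp]
  calc exp (-μ.re * y) * (1 / √(2 * (cosh y - x)))
      ≤ exp (-μ.re * y) * ((1 - |x|) ^ (-1 / 2 : ℝ) * exp (-y / 2)) := by
        gcongr
        exact one_div_sqrt_two_mul_cosh_sub_le (abs_lt.mpr hx) y
    _ = (1 - |x|) ^ (-1 / 2 : ℝ) * exp (-(μ.re + 1 / 2) * y) := by
        rw [mul_left_comm, ← exp_add]
        ring_nf

lemma cpow_neg_half_I_mul_ofReal {r : ℝ} (hr : r ≠ 0) :
    (Complex.I * r) ^ (((-1 / 2 : ℝ)) : ℂ) = Complex.exp (-(π * Complex.I / 4)) *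
      (((1 / √r : ℝ) : ℂ) + Complex.I * ((1 / √(-r) : ℝ) : ℂ)) := by
  have hsqrt : ∀ {t : ℝ}, 0 < t → ((1 / √t : ℝ) : ℂ) = Complex.exp (-(log t / 2 : ℝ)) := by
    intro t ht
    rw [one_div_sqrt_eq_rpow, rpow_def_of_pos ht, Complex.ofReal_exp]
    push_cast
    ring_nf
  rw [Complex.cpow_def_of_ne_zero (mul_ne_zero Complex.I_ne_zero (by exact_mod_cast hr)),
    mul_comm Complex.I]
  rcases hr.lt_or_gt with h | h
  · have hI : Complex.I = Complex.exp (π * Complex.I / 2) := by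
      rw [show (π : ℂ) * Complex.I / 2 = (π / 2 : ℂ) * Complex.I by ring,
        Complex.exp_pi_div_two_mul_I]
    rw [show (r : ℂ) * Complex.I = ((-r : ℝ) : ℂ) * -Complex.I by push_cast; ring,
      Complex.log_ofReal_mul (neg_pos.mpr h) (neg_ne_zero.mpr Complex.I_ne_zero),
      Complex.log_neg_I, sqrt_eq_zero_of_nonpos h.le, hsqrt (neg_pos.mpr h)]
    nth_rewrite 3 [hI]
    rw [div_zero, Complex.ofReal_zero, zero_add, ← Complex.exp_add, ← Complex.exp_add]
    congr 1
    push_cast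
    ring
  · rw [Complex.log_ofReal_mul h Complex.I_ne_zero, Complex.log_I,
      sqrt_eq_zero_of_nonpos (neg_nonpos.mpr h.le), hsqrt h, div_zero, Complex.ofReal_zero,
      mul_zero, add_zero, ← Complex.exp_add]
    congr 1
    push_cast
    ring

lemma cos_ofReal_add_mul_I (a y : ℝ) : Complex.cos (a + y * Complex.I) =
    ((cos a * cosh y : ℝ) : ℂ) - ((sin a * sinh y : ℝ) : ℂ) * Complex.I := by
  rw [Complex.cos_add_mul_I]
  push_cast
  rfl

lemma norm_cos_ofReal_add_mul_I_sub_sq (a y x : ℝ) :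
    ‖Complex.cos (a + y * Complex.I) - x‖ ^ 2 =
      (cos a * cosh y - x) ^ 2 + (sin a * sinh y) ^ 2 := by
  rw [cos_ofReal_add_mul_I, ← Complex.normSq_eq_norm_sq, Complex.normSq_apply]
  simp only [Complex.sub_re, Complex.sub_im, Complex.mul_re, Complex.mul_im, Complex.ofReal_re,
    Complex.ofReal_im, Complex.I_re, Complex.I_im]
  ring

lemma abs_cos_sub_le_norm_cos_ofReal_add_mul_I_sub {x : ℝ} (hx : |x| ≤ 1) (a y : ℝ) :
    |cos a - x| ≤ ‖Complex.cos (a + y * Complex.I) - x‖ := by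
  refine le_of_sq_le_sq ?_ (norm_nonneg _)
  have hxcos : x * cos a ≤ 1 := (le_abs_self _).trans <| by
    rw [abs_mul]
    exact mul_le_one₀ hx (abs_nonneg _) (abs_cos_le_one a)
  have hexcess : (cos a * cosh y - x) ^ 2 + (sin a * sinh y) ^ 2 - (cos a - x) ^ 2 =
      (cosh y - 1) * (cosh y + 1 - 2 * (x * cos a)) := by
    rw [mul_pow (sin a), sinh_sq, sin_sq]
    ring
  rw [norm_cos_ofReal_add_mul_I_sub_sq, sq_abs]
  nlinarith [mul_nonneg (sub_nonneg.mpr (one_le_cosh y))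
    (by linarith [one_le_cosh y] : 0 ≤ cosh y + 1 - 2 * (x * cos a))]

lemma cosh_sub_one_le_norm_cos_ofReal_add_mul_I_sub {x : ℝ} (hx : |x| ≤ 1) (a y : ℝ) :
    cosh y - 1 ≤ ‖Complex.cos (a + y * Complex.I) - x‖ := by
  refine le_of_sq_le_sq ?_ (norm_nonneg _)
  have hxcos : x * cos a ≤ 1 := (le_abs_self _).trans <| by
    rw [abs_mul]
    exact mul_le_one₀ hx (abs_nonneg _) (abs_cos_le_one a)
  have hexcess : (cos a * cosh y - x) ^ 2 + (sin a * sinh y) ^ 2 - (cosh y - 1) ^ 2 =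
      2 * (cosh y - 1) * (1 - x * cos a) + (cos a - x) ^ 2 := by
    rw [mul_pow (sin a), sinh_sq, sin_sq]
    ring
  rw [norm_cos_ofReal_add_mul_I_sub_sq]
  nlinarith [mul_nonneg (sub_nonneg.mpr (one_le_cosh y)) (sub_nonneg.mpr hxcos),
    sq_nonneg (cos a - x)]

/-- The integrand whose boundary values on the half-strip `0 < Re z < π`, `0 < Im z` are those of
the Mehler integrals. The factor `I` turns the strip into the half-plane where the principal
power is holomorphic. -/
noncomputable def stripIntegrand (μ : ℂ) (x : ℝ) (z : ℂ) : ℂ :=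
  Complex.exp (Complex.I * μ * z) *
    (Complex.I * (2 * (Complex.cos z - x))) ^ (((-1 / 2 : ℝ)) : ℂ)

lemma measurable_stripIntegrand (μ : ℂ) (x : ℝ) : Measurable (stripIntegrand μ x) := by
  unfold stripIntegrand
  fun_prop

lemma differentiableAt_stripIntegrand (μ : ℂ) {x : ℝ} {z : ℂ}
    (hz : Complex.I * (2 * (Complex.cos z - x)) ∈ Complex.slitPlane) :
    DifferentiableAt ℂ (stripIntegrand μ x) z :=
  DifferentiableAt.mul (by fun_prop) (DifferentiableAt.cpow (by fun_prop) (by fun_prop) hz)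

lemma I_mul_two_mul_cos_sub_mem_slitPlane {x : ℝ} (hx : x ∈ Set.Icc (-1) 1) {a y : ℝ}
    (ha : a ∈ Set.Icc 0 π) (hy : 0 < y) :
    Complex.I * (2 * (Complex.cos (a + y * Complex.I) - x)) ∈ Complex.slitPlane := by
  have hcosh : 1 < cosh y := one_lt_cosh.mpr hy.ne'
  have hparts : Complex.I * (2 * (Complex.cos (a + y * Complex.I) - x)) =
      ⟨2 * (sin a * sinh y), 2 * (cos a * cosh y - x)⟩ := by
    rw [cos_ofReal_add_mul_I, Complex.mk_eq_add_mul_I]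
    push_cast
    linear_combination (-2 * (Complex.sin a * Complex.sinh y)) * Complex.I_sq
  rw [hparts, Complex.mem_slitPlane_iff]
  rcases eq_or_lt_of_le ha.1 with rfl | hpos
  · right
    rw [cos_zero]
    linarith [hx.2]
  rcases eq_or_lt_of_le ha.2 with rfl | hlt
  · right
    rw [cos_pi]
    linarith [hx.1]
  · left
    have := sin_pos_of_pos_of_lt_pi hpos hlt
    have := sinh_pos_iff.mpr hy
    positivity

lemma norm_stripIntegrand (μ : ℂ) (x a y : ℝ) :
    ‖stripIntegrand μ x (a + y * Complex.I)‖ = exp (-(μ.im * a) - μ.re * y) *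
      (2 * ‖Complex.cos (a + y * Complex.I) - x‖) ^ (-1 / 2 : ℝ) := by
  rw [stripIntegrand, norm_mul, norm_exp_I_mul, Complex.norm_cpow_real, norm_mul, norm_mul,
    Complex.norm_I, one_mul, Complex.norm_ofNat]

lemma stripIntegrand_I_mul {μ : ℂ} {x y : ℝ} (h : x < cosh y) :
    stripIntegrand μ x (y * Complex.I) = Complex.exp (-(π * Complex.I / 4)) *
      (Complex.exp (-μ * y) * ((1 / √(2 * (cosh y - x)) : ℝ) : ℂ)) := by
  have hcos : 2 * (Complex.cos (y * Complex.I) - x) = ((2 * (cosh y - x) : ℝ) : ℂ) := by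
    rw [Complex.cos_mul_I]
    push_cast
    rfl
  rw [stripIntegrand, hcos, cpow_neg_half_I_mul_ofReal (by linarith),
    sqrt_eq_zero_of_nonpos (by linarith : -(2 * (cosh y - x)) ≤ 0),
    show Complex.I * μ * (y * Complex.I) = -μ * y by linear_combination (μ * y) * Complex.I_sq,
    div_zero, Complex.ofReal_zero]
  ring

lemma stripIntegrand_pi_add_I_mul {μ : ℂ} {x y : ℝ} (h : -x < cosh y) :
    stripIntegrand μ x (π + y * Complex.I) =
      Complex.exp (-(π * Complex.I / 4)) * Complex.I * Complex.exp (Complex.I * μ * π) *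
      (Complex.exp (-μ * y) * ((1 / √(2 * (cosh y - -x)) : ℝ) : ℂ)) := by
  have hcos : 2 * (Complex.cos (π + y * Complex.I) - x) = ((-(2 * (cosh y - -x)) : ℝ) : ℂ) := by
    rw [cos_ofReal_add_mul_I, cos_pi, sin_pi]
    push_cast
    ring
  rw [stripIntegrand, hcos, cpow_neg_half_I_mul_ofReal (by linarith), neg_neg,
    sqrt_eq_zero_of_nonpos (by linarith : -(2 * (cosh y - -x)) ≤ 0),
    show Complex.I * μ * (π + y * Complex.I) = Complex.I * μ * π + -μ * y by
      linear_combination (μ * y) * Complex.I_sq, Complex.exp_add, div_zero, Complex.ofReal_zero]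
  ring

lemma stripIntegrand_ofReal (μ : ℂ) {x a : ℝ} (h : cos a ≠ x) :
    stripIntegrand μ x a = Complex.exp (-(π * Complex.I / 4)) *
      (Complex.exp (Complex.I * μ * a) * ((1 / √(2 * (cos a - x)) : ℝ) : ℂ) +
        Complex.I * (Complex.exp (Complex.I * μ * a) * ((1 / √(2 * (x - cos a)) : ℝ) : ℂ))) := by
  have hcos : 2 * (Complex.cos a - x) = ((2 * (cos a - x) : ℝ) : ℂ) := by push_cast; rfl
  rw [stripIntegrand, hcos,
    cpow_neg_half_I_mul_ofReal (mul_ne_zero two_ne_zero (sub_ne_zero.mpr h)),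
    show -(2 * (cos a - x)) = 2 * (x - cos a) by ring]
  ring

lemma tendsto_integral_inv_self_Ioi {E : Type*} [NormedAddCommGroup E] [NormedSpace ℝ E]
    {h : ℝ → E} (hh : IntegrableOn h (Set.Ioi 0)) :
    Tendsto (fun N : ℝ => ∫ y in N⁻¹..N, h y) atTop (𝓝 (∫ y in Set.Ioi 0, h y)) := by
  have hcover : AECover (volume.restrict (Set.Ioi (0 : ℝ))) atTop
      fun N : ℝ => Set.Ioi N⁻¹ ∩ Set.Iic N :=
    (aecover_Ioi_of_Ioi tendsto_inv_atTop_zero).inter (aecover_Iic tendsto_id).restrict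
  refine (hcover.integral_tendsto_of_countably_generated hh).congr' ?_
  filter_upwards [eventually_ge_atTop 1] with N hN
  have hpos : 0 < N⁻¹ := inv_pos.mpr (by linarith)
  rw [integral_of_le ((inv_le_one_of_one_le₀ hN).trans hN), Set.Ioi_inter_Iic,
    Measure.restrict_restrict measurableSet_Ioc, Set.inter_eq_left.mpr]
  exact fun y hy => hpos.trans hy.1

lemma stripIntegrand_rectangle (μ : ℂ) {x : ℝ} (hx : x ∈ Set.Icc (-1) 1) {a b : ℝ} (ha : 0 < a)
    (hab : a ≤ b) :
    (∫ t in 0..π, stripIntegrand μ x (t + a * Complex.I)) -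
      (∫ t in 0..π, stripIntegrand μ x (t + b * Complex.I)) +
      Complex.I * (∫ y in a..b, stripIntegrand μ x (π + y * Complex.I)) -
      Complex.I * (∫ y in a..b, stripIntegrand μ x (y * Complex.I)) = 0 := by
  have hrect := Complex.integral_boundary_rect_eq_zero_of_differentiableOn (stripIntegrand μ x)
    ⟨0, a⟩ ⟨π, b⟩ fun z hz => ?_
  · simpa only [smul_eq_mul, Complex.ofReal_zero, zero_add] using hrect
  · rw [Complex.mem_reProdIm, Set.uIcc_of_le pi_pos.le, Set.uIcc_of_le hab] at hz
    have hmem := I_mul_two_mul_cos_sub_mem_slitPlane hx hz.1 (ha.trans_le hz.2.1)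
    rw [Complex.re_add_im] at hmem
    exact (differentiableAt_stripIntegrand μ hmem).differentiableWithinAt

lemma norm_stripIntegrand_le_of_four_le (μ : ℂ) {x : ℝ} (hx : |x| ≤ 1) {a N : ℝ}
    (ha : a ∈ Set.Icc 0 π) (hN : 4 ≤ N) :
    ‖stripIntegrand μ x (a + N * Complex.I)‖ ≤
      exp (|μ.im| * π) * 4 ^ (1 / 2 : ℝ) * exp (-((μ.re + 1 / 2) * N)) := by
  have hlower : exp N / 4 ≤ 2 * ‖Complex.cos (a + N * Complex.I) - x‖ := by
    have hcosh := cosh_eq N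
    linarith [cosh_sub_one_le_norm_cos_ofReal_add_mul_I_sub hx a N, exp_pos (-N),
      add_one_le_exp N]
  have hpow : (exp N / 4) ^ (-1 / 2 : ℝ) = 4 ^ (1 / 2 : ℝ) * exp (-N / 2) := by
    rw [div_rpow (exp_pos _).le (by norm_num), ← exp_mul, neg_div 2 (1 : ℝ),
      rpow_neg (by norm_num), div_inv_eq_mul, mul_comm]
    ring_nf
  rw [norm_stripIntegrand]
  calc _ ≤ exp (|μ.im| * π - μ.re * N) * (4 ^ (1 / 2 : ℝ) * exp (-N / 2)) := by
        refine mul_le_mul (exp_le_exp.mpr ?_) ((rpow_le_rpow_of_nonpos (by positivity) hlower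
          (by norm_num)).trans_eq hpow) (by positivity) (by positivity)
        linarith [neg_mul_le_abs_mul_of_mem_Icc ha μ.im]
    _ = exp (|μ.im| * π) * 4 ^ (1 / 2 : ℝ) * exp (-((μ.re + 1 / 2) * N)) := by
        rw [mul_left_comm, ← exp_add, mul_right_comm, ← exp_add, mul_comm]
        ring_nf

lemma tendsto_integral_stripIntegrand_atTop {μ : ℂ} (hμ : -1 / 2 < μ.re) {x : ℝ} (hx : |x| ≤ 1) :
    Tendsto (fun N : ℝ => ∫ a in 0..π, stripIntegrand μ x (a + N * Complex.I)) atTop (𝓝 0) := by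
  have hdecay : Tendsto (fun N : ℝ => exp (-((μ.re + 1 / 2) * N))) atTop (𝓝 0) :=
    tendsto_exp_neg_atTop_nhds_zero.comp
      (tendsto_id.const_mul_atTop (by linarith : 0 < μ.re + 1 / 2))
  have hbound := (hdecay.const_mul (exp (|μ.im| * π) * 4 ^ (1 / 2 : ℝ))).mul_const |π - 0|
  rw [mul_zero, zero_mul] at hbound
  refine squeeze_zero_norm' ?_ hbound
  filter_upwards [eventually_ge_atTop 4] with N hN
  refine norm_integral_le_of_norm_le_const fun a ha => ?_
  rw [Set.uIoc_of_le pi_pos.le] at ha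
  exact norm_stripIntegrand_le_of_four_le μ hx (Set.Ioc_subset_Icc_self ha) hN

lemma ae_Ioo_cos_ne (x : ℝ) : ∀ᵐ a ∂(volume.restrict (Set.Ioo 0 π)), cos a ≠ x := by
  filter_upwards [ae_restrict_of_ae (Measure.ae_ne volume (arccos x)),
    ae_restrict_mem measurableSet_Ioo] with a hne ha hcos
  exact hne (by rw [← hcos, arccos_cos ha.1.le ha.2.le])

lemma norm_stripIntegrand_le_of_abs_le_one (μ : ℂ) {x : ℝ} (hx : |x| ≤ 1) {a y : ℝ}
    (ha : a ∈ Set.Icc 0 π) (hcos : cos a ≠ x) (hy : |y| ≤ 1) :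
    ‖stripIntegrand μ x (a + y * Complex.I)‖ ≤
      exp (|μ.im| * π + |μ.re|) * (2 * |cos a - x|) ^ (-1 / 2 : ℝ) := by
  have : 0 < |cos a - x| := abs_pos.mpr (sub_ne_zero.mpr hcos)
  rw [norm_stripIntegrand]
  refine mul_le_mul (exp_le_exp.mpr ?_) (rpow_le_rpow_of_nonpos (by positivity)
    (mul_le_mul_of_nonneg_left (abs_cos_sub_le_norm_cos_ofReal_add_mul_I_sub hx a y) two_pos.le)
    (by norm_num)) (by positivity) (exp_pos _).le
  have hre : -(μ.re * y) ≤ |μ.re| := (neg_le_abs _).trans <| by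
    rw [abs_mul]
    exact mul_le_of_le_one_right (abs_nonneg _) hy
  linarith [neg_mul_le_abs_mul_of_mem_Icc ha μ.im]

lemma continuousAt_stripIntegrand_ofReal (μ : ℂ) {x a : ℝ} (hcos : cos a ≠ x) :
    ContinuousAt (stripIntegrand μ x) a := by
  refine (differentiableAt_stripIntegrand μ ?_).continuousAt
  have hre : Complex.I * (2 * (Complex.cos a - x)) = ⟨0, 2 * (cos a - x)⟩ := by
    rw [Complex.mk_eq_add_mul_I]
    push_cast
    ring
  rw [hre]
  exact Or.inr (mul_ne_zero two_ne_zero (sub_ne_zero.mpr hcos))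

lemma tendsto_integral_stripIntegrand_inv_atTop (μ : ℂ) {x : ℝ} (hx : x ∈ Set.Ioo (-1) 1) :
    Tendsto (fun N : ℝ => ∫ a in 0..π, stripIntegrand μ x (a + (N⁻¹ : ℝ) * Complex.I)) atTop
      (𝓝 (∫ a in 0..π, stripIntegrand μ x a)) := by
  simp only [integral_of_le pi_pos.le, integral_Ioc_eq_integral_Ioo]
  refine tendsto_integral_filter_of_dominated_convergence _
    (Eventually.of_forall fun N => ((measurable_stripIntegrand μ x).comp
      (by fun_prop)).aestronglyMeasurable) ?_
    ((integrableOn_two_mul_abs_cos_sub_rpow hx).const_mul (exp (|μ.im| * π + |μ.re|))) ?_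
  · filter_upwards [eventually_ge_atTop 1] with N hN
    filter_upwards [ae_Ioo_cos_ne x, ae_restrict_mem measurableSet_Ioo] with a hcos ha
    refine norm_stripIntegrand_le_of_abs_le_one μ (abs_lt.mpr hx).le (Set.Ioo_subset_Icc_self ha)
      hcos ?_
    rw [abs_of_nonneg (by positivity)]
    exact inv_le_one_of_one_le₀ hN
  · filter_upwards [ae_Ioo_cos_ne x] with a hcos
    refine (continuousAt_stripIntegrand_ofReal μ hcos).tendsto.comp ?_
    have hlim := (((Complex.continuous_ofReal.tendsto 0).comp tendsto_inv_atTop_zero).mul_const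
      Complex.I).const_add (a : ℂ)
    simpa using hlim

lemma exp_mul_one_div_sqrt_pi_sub (μ : ℂ) (x β : ℝ) :
    Complex.exp (Complex.I * μ * (π - β : ℝ)) * ((1 / √(2 * (x - cos (π - β))) : ℝ) : ℂ) =
      Complex.exp (Complex.I * μ * π) *
        (Complex.exp (Complex.I * -μ * β) * ((1 / √(2 * (cos β - -x)) : ℝ) : ℂ)) := by
  rw [cos_pi_sub, show x - -cos β = cos β - -x by ring, ← mul_assoc, ← Complex.exp_add]
  congr 2
  push_cast
  ring

lemma intervalIntegrable_exp_mul_one_div_sqrt_sub_cos (μ : ℂ) {x : ℝ} (hx : x ∈ Set.Ioo (-1) 1) :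
    IntervalIntegrable (fun β : ℝ => Complex.exp (Complex.I * μ * β) *
      ((1 / √(2 * (x - cos β)) : ℝ) : ℂ)) volume 0 π := by
  have hneg := ((intervalIntegrable_iff_integrableOn_Ioo_of_le pi_pos.le).mpr
    (integrableOn_circularMehler (-μ) (x := -x) ⟨by linarith [hx.2], by linarith [hx.1]⟩)).const_mul
    (Complex.exp (Complex.I * μ * π))
  simp_rw [← exp_mul_one_div_sqrt_pi_sub] at hneg
  simpa using (hneg.comp_sub_left π).symm

lemma integral_exp_mul_one_div_sqrt_sub_cos (μ : ℂ) (x : ℝ) :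
    ∫ β in 0..π, Complex.exp (Complex.I * μ * β) * ((1 / √(2 * (x - cos β)) : ℝ) : ℂ) =
      Complex.exp (Complex.I * μ * π) * circularMehler (-μ) (-x) := by
  rw [circularMehler, ← MeasureTheory.integral_const_mul]
  simp_rw [← exp_mul_one_div_sqrt_pi_sub, ← integral_Ioc_eq_integral_Ioo,
    ← integral_of_le pi_pos.le]
  rw [integral_comp_sub_left (fun β : ℝ => Complex.exp (Complex.I * μ * β) *
    ((1 / √(2 * (x - cos β)) : ℝ) : ℂ)) π, sub_self, sub_zero]

lemma integral_stripIntegrand_ofReal (μ : ℂ) {x : ℝ} (hx : x ∈ Set.Ioo (-1) 1) :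
    ∫ a in 0..π, stripIntegrand μ x a = Complex.exp (-(π * Complex.I / 4)) *
      (circularMehler μ x +
        Complex.I * (Complex.exp (Complex.I * μ * π) * circularMehler (-μ) (-x))) := by
  have hint := (intervalIntegrable_iff_integrableOn_Ioo_of_le pi_pos.le).mpr
    (integrableOn_circularMehler μ hx)
  have hint' := intervalIntegrable_exp_mul_one_div_sqrt_sub_cos μ hx
  rw [← integral_exp_mul_one_div_sqrt_sub_cos, circularMehler, ← integral_Ioc_eq_integral_Ioo,
    ← integral_of_le pi_pos.le, ← intervalIntegral.integral_const_mul,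
    ← intervalIntegral.integral_add hint (hint'.const_mul _),
    ← intervalIntegral.integral_const_mul]
  simp only [integral_of_le pi_pos.le, integral_Ioc_eq_integral_Ioo]
  exact integral_congr_ae ((ae_Ioo_cos_ne x).mono fun a ha => stripIntegrand_ofReal μ ha)

lemma tendsto_integral_stripIntegrand_left {μ : ℂ} (hμ : -1 / 2 < μ.re) {x : ℝ}
    (hx : x ∈ Set.Ioo (-1) 1) :
    Tendsto (fun N : ℝ => ∫ y in N⁻¹..N, stripIntegrand μ x (y * Complex.I)) atTop
      (𝓝 (Complex.exp (-(π * Complex.I / 4)) * hyperbolicMehler μ x)) := by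
  refine ((tendsto_integral_inv_self_Ioi (integrableOn_hyperbolicMehler hμ hx)).const_mul
    (Complex.exp (-(π * Complex.I / 4)))).congr fun N => ?_
  rw [← intervalIntegral.integral_const_mul]
  exact integral_congr fun y _ => (stripIntegrand_I_mul (hx.2.trans_le (one_le_cosh y))).symm

lemma tendsto_integral_stripIntegrand_right {μ : ℂ} (hμ : -1 / 2 < μ.re) {x : ℝ}
    (hx : x ∈ Set.Ioo (-1) 1) :
    Tendsto (fun N : ℝ => ∫ y in N⁻¹..N, stripIntegrand μ x (π + y * Complex.I)) atTop
      (𝓝 (Complex.exp (-(π * Complex.I / 4)) * Complex.I * Complex.exp (Complex.I * μ * π) *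
        hyperbolicMehler μ (-x))) := by
  have hx' : -x ∈ Set.Ioo (-1) 1 := ⟨by linarith [hx.2], by linarith [hx.1]⟩
  refine ((tendsto_integral_inv_self_Ioi (integrableOn_hyperbolicMehler hμ hx')).const_mul
    (Complex.exp (-(π * Complex.I / 4)) * Complex.I *
      Complex.exp (Complex.I * μ * π))).congr fun N => ?_
  rw [← intervalIntegral.integral_const_mul]
  exact integral_congr fun y _ =>
    (stripIntegrand_pi_add_I_mul (hx'.2.trans_le (one_le_cosh y))).symm

theorem circularMehler_add_eq_hyperbolicMehler_add {μ : ℂ} (hμ : -1 / 2 < μ.re) {x : ℝ}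
    (hx : x ∈ Set.Ioo (-1) 1) :
    circularMehler μ x + Complex.I * Complex.exp (Complex.I * μ * π) * circularMehler (-μ) (-x) =
      Complex.exp (Complex.I * μ * π) * hyperbolicMehler μ (-x) +
        Complex.I * hyperbolicMehler μ x := by
  have hcontour := (((tendsto_integral_stripIntegrand_inv_atTop μ hx).sub
    (tendsto_integral_stripIntegrand_atTop hμ (abs_lt.mpr hx).le)).add
    ((tendsto_integral_stripIntegrand_right hμ hx).const_mul Complex.I)).sub
    ((tendsto_integral_stripIntegrand_left hμ hx).const_mul Complex.I)
  rw [integral_stripIntegrand_ofReal μ hx] at hcontour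
  have hzero := tendsto_nhds_unique (hcontour.congr' <| by
    filter_upwards [eventually_ge_atTop 1] with N hN
    exact stripIntegrand_rectangle μ (Set.Ioo_subset_Icc_self hx)
      (inv_pos.mpr (by linarith)) ((inv_le_one_of_one_le₀ hN).trans hN)) tendsto_const_nhds
  refine mul_left_cancel₀ (Complex.exp_ne_zero (-(π * Complex.I / 4))) ?_
  linear_combination hzero - Complex.exp (-(π * Complex.I / 4)) *
    Complex.exp (Complex.I * μ * π) * hyperbolicMehler μ (-x) * Complex.I_sq

lemma circularMehler_neg_sub_eq_hyperbolicMehler_sub {μ : ℂ} (hμ : -1 / 2 < μ.re) {x : ℝ}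
    (hx : x ∈ Set.Ioo (-1) 1) :
    circularMehler (-μ) x -
        Complex.I * Complex.exp (-(Complex.I * μ * π)) * circularMehler μ (-x) =
      Complex.exp (-(Complex.I * μ * π)) * hyperbolicMehler μ (-x) -
        Complex.I * hyperbolicMehler μ x := by
  have hconj := congrArg (starRingEnd ℂ) (circularMehler_add_eq_hyperbolicMehler_add
    (μ := starRingEnd ℂ μ) (by rwa [Complex.conj_re]) hx)
  have hneg : circularMehler (-starRingEnd ℂ μ) (-x) = starRingEnd ℂ (circularMehler μ (-x)) := by
    rw [← conj_circularMehler_conj (starRingEnd ℂ μ), Complex.conj_conj]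
  rw [hneg] at hconj
  simp only [map_add, map_mul, conj_circularMehler_conj, conj_hyperbolicMehler_conj,
    ← Complex.exp_conj, Complex.conj_conj, Complex.conj_I, Complex.conj_ofReal] at hconj
  rw [show -Complex.I * μ * (π : ℂ) = -(Complex.I * μ * π) by ring] at hconj
  linear_combination hconj

lemma setIntegral_mul_one_div_sqrt_cos_sub {x : ℝ} (hx : x ∈ Set.Icc (-1) 1) (f : ℝ → ℂ) :
    ∫ β in Set.Ioo 0 π, f β * ((1 / √(2 * (cos β - x)) : ℝ) : ℂ) =
      ∫ β in Set.Ioo 0 (arccos x), f β * ((1 / √(2 * (cos β - x)) : ℝ) : ℂ) := by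
  refine setIntegral_eq_of_subset_of_forall_sdiff_eq_zero measurableSet_Ioo
    (Set.Ioo_subset_Ioo_right (arccos_le_pi x)) ?_
  rintro β ⟨hβ, hnot⟩
  have hle : arccos x ≤ β := not_lt.mp fun h => hnot ⟨hβ.1, h⟩
  have hcos : cos β ≤ x :=
    (cos_le_cos_of_nonneg_of_le_pi (arccos_nonneg x) hβ.2.le hle).trans_eq (cos_arccos hx.1 hx.2)
  rw [sqrt_eq_zero_of_nonpos (by linarith), div_zero, Complex.ofReal_zero, mul_zero]

lemma legendreP_eq_integral_Ioo_pi (ν : ℂ) {x : ℝ} (hx : x ∈ Set.Ico (-1) 1) :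
    legendreP ν x = ((2 / π : ℝ) : ℂ) * ∫ β in Set.Ioo 0 π,
      Complex.cos ((ν + 1 / 2) * β) * ((1 / √(2 * (cos β - x)) : ℝ) : ℂ) := by
  rw [legendreP, if_neg hx.2.ne, integral_of_le (arccos_nonneg x), integral_Ioc_eq_integral_Ioo,
    setIntegral_mul_one_div_sqrt_cos_sub (Set.Ico_subset_Icc_self hx)]
  congr 1
  refine integral_congr_ae (Eventually.of_forall fun β => ?_)
  simp only
  rw [show (2 * ν + 1) * (β : ℂ) / 2 = (ν + 1 / 2) * β by ring]
  push_cast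
  ring

lemma legendreP_eq_circularMehler (ν : ℂ) {x : ℝ} (hx : x ∈ Set.Ioo (-1) 1) :
    legendreP ν x = ((1 / π : ℝ) : ℂ) *
      (circularMehler (ν + 1 / 2) x + circularMehler (-(ν + 1 / 2)) x) := by
  rw [legendreP_eq_integral_Ioo_pi ν (Set.Ioo_subset_Ico_self hx), circularMehler, circularMehler,
    ← MeasureTheory.integral_add (integrableOn_circularMehler _ hx)
      (integrableOn_circularMehler _ hx),
    ← MeasureTheory.integral_const_mul, ← MeasureTheory.integral_const_mul]
  refine integral_congr_ae (Eventually.of_forall fun β => ?_)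
  simp only
  rw [Complex.cos, show Complex.I * (ν + 1 / 2) * (β : ℂ) = (ν + 1 / 2) * β * Complex.I by ring,
    show Complex.I * -(ν + 1 / 2) * (β : ℂ) = -((ν + 1 / 2) * β) * Complex.I by ring]
  push_cast
  ring

lemma sin_mul_pi_ne_zero {ν : ℂ} (hν : ∀ m : ℤ, ν ≠ m) : Complex.sin (ν * π) ≠ 0 := by
  rw [Ne, Complex.sin_eq_zero_iff]
  rintro ⟨k, hk⟩
  exact hν k (mul_right_cancel₀ (by exact_mod_cast pi_ne_zero) hk)

lemma exp_I_mul_add_half_mul_pi (ν : ℂ) :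
    Complex.exp (Complex.I * (ν + 1 / 2) * π) = Complex.I * Complex.exp (ν * π * Complex.I) := by
  rw [show Complex.I * (ν + 1 / 2) * π = π / 2 * Complex.I + ν * π * Complex.I by ring,
    Complex.exp_add, Complex.exp_pi_div_two_mul_I]

theorem legendreQ_eq_hyperbolicMehler_add {ν : ℂ} (hν : ∀ m : ℤ, ν ≠ m) (hre : -1 < ν.re) {x : ℝ}
    (hx : x ∈ Set.Ioo (-1) 1) :
    2 * legendreQ ν x = (hyperbolicMehler (ν + 1 / 2) x -
        Complex.I * circularMehler (-(ν + 1 / 2)) x) +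
      (hyperbolicMehler (ν + 1 / 2) x + Complex.I * circularMehler (ν + 1 / 2) x) := by
  have hx' : -x ∈ Set.Ioo (-1) 1 := ⟨by linarith [hx.2], by linarith [hx.1]⟩
  have hμ : -1 / 2 < (ν + 1 / 2).re := by
    rw [Complex.add_re, show (1 / 2 : ℂ) = ((1 / 2 : ℝ) : ℂ) by norm_num, Complex.ofReal_re]
    linarith
  have hupper := circularMehler_add_eq_hyperbolicMehler_add hμ hx
  have hlower := circularMehler_neg_sub_eq_hyperbolicMehler_sub hμ hx
  have hsin := sin_mul_pi_ne_zero hν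
  have hexp : Complex.exp (ν * π * Complex.I) * Complex.exp (-(ν * π) * Complex.I) = 1 := by
    rw [← Complex.exp_add, neg_mul, add_neg_cancel, Complex.exp_zero]
  have hpi : (π : ℂ) * (1 / (π : ℂ)) = 1 := mul_one_div_cancel (by exact_mod_cast pi_ne_zero)
  rw [Complex.exp_neg, exp_I_mul_add_half_mul_pi, mul_inv, Complex.inv_I, ← Complex.exp_neg,
    ← neg_mul] at hlower
  rw [exp_I_mul_add_half_mul_pi] at hupper
  rw [legendreQ, legendreP_eq_circularMehler ν hx, legendreP_eq_circularMehler ν hx',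
    div_mul_eq_mul_div, ← mul_div_assoc, div_eq_iff (mul_ne_zero two_ne_zero hsin), Complex.sin,
    Complex.cos]
  push_cast
  generalize Complex.exp (ν * π * Complex.I) = a at *
  generalize Complex.exp (-(ν * π) * Complex.I) = b at *
  generalize circularMehler (ν + 1 / 2) x = A₁ at *
  generalize circularMehler (-(ν + 1 / 2)) x = A₂ at *
  generalize circularMehler (ν + 1 / 2) (-x) = A₃ at *
  generalize circularMehler (-(ν + 1 / 2)) (-x) = A₄ at *
  linear_combination 2 * b * hupper + 2 * a * hlower - 2 * (A₃ + A₄) * (a * b * Complex.I_sq - hexp)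
    - (A₁ - A₂) * (b - a) * Complex.I_sq + ((a + b) * (A₁ + A₂) - 2 * (A₃ + A₄)) * hpi

/-! ### The Euler kernel and its boundary values -/

lemma cpow_eq_exp_mul_log {r : ℝ} (hr : 0 < r) (a : ℂ) :
    (r : ℂ) ^ a = Complex.exp (a * (log r : ℝ)) := by
  rw [Complex.cpow_def_of_ne_zero (by exact_mod_cast hr.ne'), ← Complex.ofReal_log hr.le, mul_comm]

/-- The root `w = √(1 - 2 s / (1 + z))` that uniformises the Euler kernel. The branch is the
principal one, with values in `I * (0, ∞)` where the radicand is negative. -/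
noncomputable def eulerRoot (z : ℂ) (s : ℝ) : ℂ := (1 - 2 * s / (1 + z)) ^ (2⁻¹ : ℂ)

/-- The kernel of the Euler type representation of `∫ (1 + ξ) ^ σ * P_ν(ξ) / (z - ξ)`; it is used
with `w = eulerRoot z s`. -/
noncomputable def eulerKernel (ν w : ℂ) (s : ℝ) : ℂ :=
  (s : ℂ) ^ ν * ((1 / √(1 - s) : ℝ) : ℂ) * (1 + w) ^ (-2 * ν - 1) * w⁻¹

/-- The Euler integral of degree `ν`, a multiple of the Cauchy transform of
`(1 + ξ) ^ (ν - n) * P_ν(ξ)`. -/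
noncomputable def eulerIntegral (ν z : ℂ) : ℂ :=
  ∫ s in Set.Ioo (0 : ℝ) 1, eulerKernel ν (eulerRoot z s) s

lemma measurable_eulerKernel_eulerRoot (ν z : ℂ) :
    Measurable fun s => eulerKernel ν (eulerRoot z s) s := by
  unfold eulerKernel eulerRoot
  fun_prop

lemma eulerRoot_re_nonneg (z : ℂ) (s : ℝ) : 0 ≤ (eulerRoot z s).re := by
  rw [eulerRoot, Complex.cpow_inv_two_re]
  exact sqrt_nonneg _

lemma eulerRoot_sq (z : ℂ) (s : ℝ) : eulerRoot z s ^ 2 = 1 - 2 * s / (1 + z) := by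
  simpa only [eulerRoot, Nat.cast_ofNat] using
    Complex.cpow_nat_inv_pow (1 - 2 * s / (1 + z)) two_ne_zero

lemma norm_eulerRoot (z : ℂ) (s : ℝ) : ‖eulerRoot z s‖ = √‖1 - 2 * s / (1 + z)‖ := by
  rw [← sqrt_sq (norm_nonneg (eulerRoot z s)), ← norm_pow, eulerRoot_sq]

lemma eulerRoot_eq_of_sq_eq {z w : ℂ} {s : ℝ} (hw : w ^ 2 = 1 - 2 * s / (1 + z))
    (hlt : -(π / 2) < w.arg) (hle : w.arg ≤ π / 2) : eulerRoot z s = w := by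
  rw [eulerRoot, ← hw]
  exact_mod_cast Complex.pow_cpow_nat_inv two_ne_zero hlt hle

lemma continuousOn_cpow_inv_two : ContinuousOn (fun u : ℂ => u ^ (2⁻¹ : ℂ)) {u | 0 ≤ u.im} := by
  have hcont : Continuous fun u : ℂ =>
      ((√((‖u‖ + u.re) / 2) : ℝ) : ℂ) + ((√((‖u‖ - u.re) / 2) : ℝ) : ℂ) * Complex.I := by
    fun_prop
  refine hcont.continuousOn.congr fun u hu => ?_
  beta_reduce
  rw [← Complex.cpow_inv_two_re, ← Complex.cpow_inv_two_im_eq_sqrt hu, Complex.re_add_im]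

lemma tendsto_eulerRoot {x : ℝ} (hx : 1 + x ≠ 0) {s : ℝ} (hs : 0 ≤ s) :
    Tendsto (fun δ : ℝ => eulerRoot (x + δ * Complex.I) s) (𝓝[>] 0) (𝓝 (eulerRoot x s)) := by
  have hx' : 1 + (x : ℂ) ≠ 0 := by exact_mod_cast hx
  have hcont : ContinuousAt (fun δ : ℝ => 1 - 2 * s / (1 + (x + δ * Complex.I))) 0 := by
    refine ContinuousAt.sub (by fun_prop) (ContinuousAt.div (by fun_prop) (by fun_prop) ?_)
    rwa [Complex.ofReal_zero, zero_mul, add_zero]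
  have him : ∀ z : ℂ, (1 - 2 * s / (1 + z)).im = 2 * s * z.im / Complex.normSq (1 + z) := by
    intro z
    rw [show 2 * (s : ℂ) = ((2 * s : ℝ) : ℂ) by push_cast; rfl, div_eq_mul_inv, Complex.sub_im,
      Complex.im_ofReal_mul, Complex.inv_im, Complex.one_im, Complex.add_im, Complex.one_im]
    ring
  have hzero : 1 - 2 * s / (1 + (x + ((0 : ℝ) : ℂ) * Complex.I)) = 1 - 2 * s / (1 + (x : ℂ)) := by
    rw [Complex.ofReal_zero, zero_mul, add_zero]
  rw [ContinuousAt, hzero] at hcont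
  have hmem : (1 - 2 * s / (1 + (x : ℂ))) ∈ {u : ℂ | 0 ≤ u.im} := by
    rw [Set.mem_ofPred_eq, him, Complex.ofReal_im, mul_zero, zero_div]
  refine (continuousOn_cpow_inv_two _ hmem).tendsto.comp (tendsto_nhdsWithin_iff.mpr
    ⟨hcont.mono_left nhdsWithin_le_nhds, ?_⟩)
  filter_upwards [self_mem_nhdsWithin] with δ hδ
  have : 0 ≤ (x + δ * Complex.I : ℂ).im := by simpa using (Set.mem_Ioi.mp hδ).le
  rw [him]
  exact div_nonneg (by positivity) (Complex.normSq_nonneg _)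

lemma continuousAt_eulerKernel (ν : ℂ) (s : ℝ) {w : ℂ} (hw : 0 ≤ w.re) (hw₀ : w ≠ 0) :
    ContinuousAt (fun w => eulerKernel ν w s) w := by
  refine ContinuousAt.mul (ContinuousAt.mul (by fun_prop) (ContinuousAt.cpow (by fun_prop)
    (by fun_prop) (Or.inl ?_))) (continuousAt_id.inv₀ hw₀)
  rw [Complex.add_re, Complex.one_re]
  linarith

lemma norm_one_add_cpow_le {w : ℂ} (hw : 0 ≤ w.re) {B : ℝ} (hB : ‖w‖ ≤ B) (a : ℂ) :
    ‖(1 + w) ^ a‖ ≤ (1 + B) ^ |a.re| * exp (π * |a.im|) := by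
  have hlower : 1 ≤ ‖1 + w‖ := by
    refine le_trans ?_ (Complex.re_le_norm _)
    rw [Complex.add_re, Complex.one_re]
    linarith
  have hupper : ‖1 + w‖ ≤ 1 + B := (norm_add_le _ _).trans (by rw [norm_one]; gcongr)
  refine (Complex.norm_cpow_le _ _).trans ?_
  rw [div_eq_mul_inv, ← exp_neg]
  refine mul_le_mul ((rpow_le_rpow_of_exponent_le hlower (le_abs_self _)).trans
    (rpow_le_rpow (norm_nonneg _) hupper (abs_nonneg _))) (exp_le_exp.mpr
    ((neg_le_abs _).trans ?_)) (exp_pos _).le (rpow_nonneg (by linarith) _)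
  rw [abs_mul]
  exact mul_le_mul_of_nonneg_right (Complex.abs_arg_le_pi _) (abs_nonneg _)

lemma norm_eulerKernel_le {ν w : ℂ} {s B : ℝ} (hs : s ∈ Set.Ioo 0 1) (hw : 0 ≤ w.re)
    (hB : ‖w‖ ≤ B) :
    ‖eulerKernel ν w s‖ ≤ (1 + B) ^ |(-2 * ν - 1).re| * exp (π * |(-2 * ν - 1).im|) *
      (|s - 0| ^ ν.re * |s - 1| ^ (-1 / 2 : ℝ) * ‖w‖⁻¹) := by
  have hs₁ : 0 < 1 - s := sub_pos.mpr hs.2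
  rw [eulerKernel, norm_mul, norm_mul, norm_mul, Complex.norm_cpow_eq_rpow_re_of_pos hs.1,
    Complex.norm_real, norm_inv, norm_of_nonneg (by positivity), one_div_sqrt_eq_rpow, sub_zero,
    abs_of_pos hs.1, abs_sub_comm, abs_of_pos hs₁]
  have := norm_one_add_cpow_le hw hB (-2 * ν - 1)
  have := hs.1
  calc _ ≤ s ^ ν.re * (1 - s) ^ (-1 / 2 : ℝ) *
        ((1 + B) ^ |(-2 * ν - 1).re| * exp (π * |(-2 * ν - 1).im|)) * ‖w‖⁻¹ := by gcongr
    _ = _ := by ring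

lemma norm_eulerRoot_le {z : ℂ} (hz : 0 < 1 + z.re) {s : ℝ} (hs : s ∈ Set.Icc 0 1) :
    ‖eulerRoot z s‖ ≤ √(1 + 2 / (1 + z.re)) := by
  have hnorm : 1 + z.re ≤ ‖1 + z‖ := by simpa using Complex.re_le_norm (1 + z)
  rw [norm_eulerRoot]
  refine sqrt_le_sqrt ((norm_sub_le _ _).trans ?_)
  rw [norm_one, norm_div, norm_mul, Complex.norm_ofNat, Complex.norm_real, norm_of_nonneg hs.1]
  gcongr
  linarith [hs.2]

lemma sqrt_le_norm_eulerRoot {z : ℂ} (hz : 0 < 1 + z.re) {R : ℝ} (hR : ‖1 + z‖ ≤ R) (s : ℝ) :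
    √(2 / R * |s - (1 + z.re) / 2|) ≤ ‖eulerRoot z s‖ := by
  have hz₀ : 1 + z ≠ 0 := fun h => hz.ne' (by simpa using congrArg Complex.re h)
  have hre : |s - (1 + z.re) / 2| * 2 ≤ ‖1 + z - 2 * s‖ := by
    refine Eq.trans_le ?_ (Complex.abs_re_le_norm _)
    rw [show (1 + z - 2 * s).re = ((1 + z.re) / 2 - s) * 2 by simp; ring, abs_mul, abs_two,
      abs_sub_comm]
  rw [norm_eulerRoot, one_sub_div hz₀, norm_div]
  refine sqrt_le_sqrt ?_
  calc 2 / R * |s - (1 + z.re) / 2| = |s - (1 + z.re) / 2| * 2 / R := by ring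
    _ ≤ ‖1 + z - 2 * s‖ / ‖1 + z‖ := div_le_div₀ (norm_nonneg _) hre (norm_pos_iff.mpr hz₀) hR

lemma integrableOn_abs_rpow_mul_abs_sub_rpow_mul_abs_sub_rpow {p q r c : ℝ} (hp : -1 < p)
    (hq : -1 < q) (hr : -1 < r) (hc : c ∈ Set.Ioo 0 1) :
    IntegrableOn (fun s : ℝ => |s - 0| ^ p * |s - 1| ^ q * |s - c| ^ r) (Set.Ioo 0 1) := by
  have hcont : ∀ {d t a b : ℝ}, d ∉ Set.uIcc a b →
      ContinuousOn (fun s : ℝ => |s - d| ^ t) (Set.uIcc a b) := fun hd =>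
    ContinuousOn.rpow_const (by fun_prop) fun s hs => Or.inl <| abs_ne_zero.mpr <|
      sub_ne_zero.mpr fun h => hd (h ▸ hs)
  have hleft := ((intervalIntegrable_iff_integrableOn_Ioo_of_le hc.1.le).mpr
    (integrableOn_Ioo_abs_sub_rpow_mul_abs_sub_rpow hp hr 0 c)).mul_continuousOn
    (hcont (d := 1) (t := q) fun h => hc.2.not_ge (Set.uIcc_of_le hc.1.le ▸ h).2)
  have hright := ((intervalIntegrable_iff_integrableOn_Ioo_of_le hc.2.le).mpr
    (integrableOn_Ioo_abs_sub_rpow_mul_abs_sub_rpow hr hq c 1)).mul_continuousOn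
    (hcont (d := 0) (t := p) fun h => hc.1.not_ge (Set.uIcc_of_le hc.2.le ▸ h).1)
  rw [← intervalIntegrable_iff_integrableOn_Ioo_of_le zero_le_one]
  refine (hleft.congr fun s _ => ?_).trans (hright.congr fun s _ => ?_)
  · exact mul_right_comm _ _ _
  · ring

lemma exists_integrable_bound_eulerKernel {ν : ℂ} (hν : -1 < ν.re) {x : ℝ}
    (hx : x ∈ Set.Ioo (-1) 1) :
    ∃ g : ℝ → ℝ, IntegrableOn g (Set.Ioo 0 1) ∧ ∀ δ ∈ Set.Icc (0 : ℝ) 1, ∀ s ∈ Set.Ioo 0 1,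
      s ≠ (1 + x) / 2 → ‖eulerKernel ν (eulerRoot (x + δ * Complex.I) s) s‖ ≤ g s := by
  set c := (1 + x) / 2 with hc
  have hcmem : c ∈ Set.Ioo 0 1 := ⟨by linarith [hx.1], by linarith [hx.2]⟩
  set K := (1 + √(1 + 2 / (1 + x))) ^ |(-2 * ν - 1).re| * exp (π * |(-2 * ν - 1).im|)
  refine ⟨_, (integrableOn_abs_rpow_mul_abs_sub_rpow_mul_abs_sub_rpow hν
    (by norm_num : (-1 : ℝ) < -1 / 2) (by norm_num : (-1 : ℝ) < -1 / 2) hcmem).const_mul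
    (K * (2 / 3) ^ (-1 / 2 : ℝ)), fun δ hδ s hs hsc => ?_⟩
  have hre : (x + δ * Complex.I : ℂ).re = x := by simp
  have hzpos : 0 < 1 + (x + δ * Complex.I : ℂ).re := by linarith [hx.1]
  have hnorm : ‖1 + (x + δ * Complex.I)‖ ≤ 3 := by
    refine (norm_add_le _ _).trans (by
      linarith [norm_add_le (x : ℂ) (δ * Complex.I), abs_lt.mpr hx, norm_one (α := ℂ), hδ.2,
        Complex.norm_real x, norm_eq_abs x, (by simp [abs_of_nonneg hδ.1] :
          ‖(δ : ℂ) * Complex.I‖ = δ)])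
  have hupper := norm_eulerRoot_le hzpos (Set.Ioo_subset_Icc_self hs)
  have hlower := sqrt_le_norm_eulerRoot hzpos hnorm s
  rw [hre] at hupper hlower
  have : 0 < |s - c| := abs_pos.mpr (sub_ne_zero.mpr hsc)
  have hinv : ‖eulerRoot (x + δ * Complex.I) s‖⁻¹ ≤
      (2 / 3) ^ (-1 / 2 : ℝ) * |s - c| ^ (-1 / 2 : ℝ) := by
    rw [← mul_rpow (by norm_num) (abs_nonneg _), ← one_div_sqrt_eq_rpow, one_div]
    exact inv_anti₀ (by positivity) hlower
  refine (norm_eulerKernel_le hs (eulerRoot_re_nonneg _ _) hupper).trans ?_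
  calc _ ≤ K * (|s - 0| ^ ν.re * |s - 1| ^ (-1 / 2 : ℝ) *
        ((2 / 3) ^ (-1 / 2 : ℝ) * |s - c| ^ (-1 / 2 : ℝ))) := by gcongr
    _ = _ := by ring

lemma tendsto_eulerIntegral {ν : ℂ} (hν : -1 < ν.re) {x : ℝ} (hx : x ∈ Set.Ioo (-1) 1) :
    Tendsto (fun δ : ℝ => eulerIntegral ν (x + δ * Complex.I)) (𝓝[>] 0)
      (𝓝 (eulerIntegral ν x)) := by
  have hx₀ : 0 < 1 + x := by linarith [hx.1]
  obtain ⟨g, hg, hbound⟩ := exists_integrable_bound_eulerKernel hν hx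
  have hne : ∀ᵐ s ∂(volume.restrict (Set.Ioo (0 : ℝ) 1)), s ≠ (1 + x) / 2 :=
    ae_restrict_of_ae (Measure.ae_ne volume _)
  refine tendsto_integral_filter_of_dominated_convergence g
    (Eventually.of_forall fun δ => (measurable_eulerKernel_eulerRoot ν _).aestronglyMeasurable)
    ?_ hg ?_
  · filter_upwards [Ioo_mem_nhdsGT one_pos] with δ hδ
    filter_upwards [hne, ae_restrict_mem measurableSet_Ioo] with s hsc hs
    exact hbound δ (Set.Ioo_subset_Icc_self hδ) s hs hsc
  · filter_upwards [hne, ae_restrict_mem measurableSet_Ioo] with s hsc hs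
    refine (continuousAt_eulerKernel ν s (eulerRoot_re_nonneg _ _) fun h => hsc ?_).tendsto.comp
      (tendsto_eulerRoot hx₀.ne' hs.1.le)
    have hsq := eulerRoot_sq x s
    rw [h, one_sub_div (by exact_mod_cast hx₀.ne')] at hsq
    have hnum : 1 + x - 2 * s = 0 := by
      have : (1 + x - 2 * s : ℂ) = 0 := by
        simpa [show (1 + x : ℂ) ≠ 0 by exact_mod_cast hx₀.ne'] using hsq.symm
      exact_mod_cast this
    linarith

/-! ### The Euler integral on the cut -/

lemma one_div_sqrt_one_sub_div_two_mul_sq (X : ℝ) {c : ℝ} (hc : 0 < c) :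
    1 / √(1 - X / (2 * c ^ 2)) = 2 * c * (1 / √(2 * (2 * c ^ 2 - X))) := by
  have hquot : 1 - X / (2 * c ^ 2) = 2 * (2 * c ^ 2 - X) / (2 * c) ^ 2 := by
    field_simp
  rw [hquot, sqrt_div' _ (by positivity), sqrt_sq (by positivity), one_div_div, mul_one_div]

lemma one_add_mul_div_cpow {W L : ℂ} {c S : ℝ} (hc : 0 < c) (hL : Complex.exp L = c + W * S)
    (him : L.im ∈ Set.Ioc (-π) π) (a : ℂ) :
    (1 + W * ((S / c : ℝ) : ℂ)) ^ a = Complex.exp ((L - log c) * a) := by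
  have hbase : 1 + W * ((S / c : ℝ) : ℂ) = Complex.exp (L - log c) := by
    have : (c : ℂ) ≠ 0 := by exact_mod_cast hc.ne'
    rw [Complex.exp_sub, hL, ← Complex.ofReal_exp, exp_log hc]
    push_cast
    field_simp
  have hlog : (L - log c).im = L.im := by rw [Complex.sub_im, Complex.ofReal_im, sub_zero]
  rw [hbase, Complex.cpow_def_of_ne_zero (Complex.exp_ne_zero _),
    Complex.log_exp (hlog ▸ him.1) (hlog ▸ him.2)]

lemma cpow_mul_exp_sub_log_mul (ν L : ℂ) {X c : ℝ} (hX : 0 < X) (hc : 0 < c) :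
    ((X / (2 * c ^ 2) : ℝ) : ℂ) ^ ν * Complex.exp ((L - log c) * (-2 * ν - 1)) =
      2 ^ (-ν) * (X : ℂ) ^ ν * Complex.exp (-(2 * L) * (ν + 1 / 2)) * c := by
  have htwo : (2 : ℂ) ^ (-ν) = Complex.exp (-ν * (log 2 : ℝ)) := by
    exact_mod_cast cpow_eq_exp_mul_log two_pos (-ν)
  have hexp : (c : ℂ) = Complex.exp (log c : ℝ) := by rw [← Complex.ofReal_exp, exp_log hc]
  rw [htwo, cpow_eq_exp_mul_log (by positivity), cpow_eq_exp_mul_log hX,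
    log_div hX.ne' (by positivity), log_mul two_ne_zero (by positivity), log_pow]
  conv_rhs => rw [hexp]
  rw [← Complex.exp_add, ← Complex.exp_add, ← Complex.exp_add, ← Complex.exp_add]
  congr 1
  push_cast
  ring

lemma mul_eulerKernel_eq {X c S : ℝ} (hX : 0 < X) (hc : 0 < c) (hS : S ≠ 0) {L W : ℂ}
    (hL : Complex.exp L = c + W * S) (him : L.im ∈ Set.Ioc (-π) π) (ν : ℂ) :
    ((X * (2 * S * c) / (2 * c ^ 2) ^ 2 : ℝ) : ℂ) *
        eulerKernel ν (W * ((S / c : ℝ) : ℂ)) (X / (2 * c ^ 2)) =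
      2 ^ (-ν) * (X : ℂ) ^ (ν + 1) * (W⁻¹ * (Complex.exp (-(2 * L) * (ν + 1 / 2)) *
        ((1 / √(2 * (2 * c ^ 2 - X)) : ℝ) : ℂ))) := by
  have hX' : (X : ℂ) ≠ 0 := by exact_mod_cast hX.ne'
  have : (c : ℂ) ≠ 0 := by exact_mod_cast hc.ne'
  have : (S : ℂ) ≠ 0 := by exact_mod_cast hS
  have hjac : ((X * (2 * S * c) / (2 * c ^ 2) ^ 2 : ℝ) : ℂ) * (2 * c) *
      (W * ((S / c : ℝ) : ℂ))⁻¹ = X * W⁻¹ * (c : ℂ)⁻¹ := by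
    push_cast
    rw [mul_inv]
    field_simp
  rw [eulerKernel, one_div_sqrt_one_sub_div_two_mul_sq X hc, one_add_mul_div_cpow hc hL him,
    Complex.cpow_add _ _ hX', Complex.cpow_one]
  have hpow := cpow_mul_exp_sub_log_mul ν L hX hc
  set r := 1 / √(2 * (2 * c ^ 2 - X))
  calc _ = (((X * (2 * S * c) / (2 * c ^ 2) ^ 2 : ℝ) : ℂ) * (2 * c) * (W * ((S / c : ℝ) : ℂ))⁻¹) *
        (((X / (2 * c ^ 2) : ℝ) : ℂ) ^ ν * Complex.exp ((L - log c) * (-2 * ν - 1))) * r := by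
        push_cast
        ring
    _ = _ := by
        rw [hjac, hpow]
        field_simp

lemma eulerRoot_one_add_div {x c S : ℝ} (hx : 1 + x ≠ 0) (hc : 0 < c) (hS : 0 < S) {W : ℂ}
    (hW : W.arg ∈ Set.Ioc (-(π / 2)) (π / 2)) (hcS : (W * S) ^ 2 = c ^ 2 - 1) :
    eulerRoot x ((1 + x) / (2 * c ^ 2)) = W * ((S / c : ℝ) : ℂ) := by
  have : (c : ℂ) ≠ 0 := by exact_mod_cast hc.ne'
  have : (1 + x : ℂ) ≠ 0 := by exact_mod_cast hx
  have harg : (W * ((S / c : ℝ) : ℂ)).arg = W.arg := Complex.arg_mul_real (div_pos hS hc) W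
  refine eulerRoot_eq_of_sq_eq ?_ (harg ▸ hW.1) (harg ▸ hW.2)
  calc (W * ((S / c : ℝ) : ℂ)) ^ 2 = (W * S) ^ 2 / c ^ 2 := by push_cast; ring
    _ = _ := by
      rw [hcS]
      push_cast
      field_simp

lemma setIntegral_image_div_one_add {S : Set ℝ} (hS : MeasurableSet S) {h h' : ℝ → ℝ}
    (hderiv : ∀ t ∈ S, HasDerivAt h (h' t) t) (hinj : Set.InjOn h S) (hpos : ∀ t ∈ S, 0 < 1 + h t)
    {X : ℝ} (hX : 0 < X) (g : ℝ → ℂ) :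
    ∫ s in (fun t => X / (1 + h t)) '' S, g s =
      ∫ t in S, ((X * |h' t| / (1 + h t) ^ 2 : ℝ) : ℂ) * g (X / (1 + h t)) := by
  have hquot : ∀ t ∈ S, HasDerivWithinAt (fun t => X / (1 + h t))
      (-(X * h' t) / (1 + h t) ^ 2) S t := fun t ht =>
    (((hderiv t ht).const_add 1).fun_inv (hpos t ht).ne' |>.const_mul X
      |>.congr_deriv (by ring)).hasDerivWithinAt
  have hquot_inj : Set.InjOn (fun t => X / (1 + h t)) S := fun t ht u hu heq =>
    hinj ht hu (by
      simpa [div_eq_mul_inv, hX.ne'] using heq)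
  rw [integral_image_eq_integral_abs_deriv_smul hS hquot hquot_inj]
  refine setIntegral_congr_fun hS fun t _ => ?_
  rw [Complex.real_smul, abs_div, abs_neg, abs_mul, abs_of_pos hX, abs_sq]

lemma image_div_one_add_cosh {X : ℝ} (hX : 0 < X) :
    (fun t => X / (1 + cosh t)) '' Set.Ioi 0 = Set.Ioo 0 (X / 2) := by
  ext s
  constructor
  · rintro ⟨t, ht, rfl⟩
    have := one_lt_cosh.mpr (ne_of_gt ht)
    exact ⟨by positivity, div_lt_div_of_pos_left hX two_pos (by linarith)⟩
  · intro hs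
    have hone : 1 < X / s - 1 := by
      rw [lt_sub_iff_add_lt, lt_div_iff₀ hs.1]
      linarith [hs.2]
    refine ⟨arcosh (X / s - 1), arcosh_pos hone, ?_⟩
    beta_reduce
    rw [cosh_arcosh hone.le, add_sub_cancel, div_div_cancel₀ hX.ne']

lemma image_div_one_add_cos {x : ℝ} (hx : x ∈ Set.Ioo (-1) 1) :
    (fun t => (1 + x) / (1 + cos t)) '' Set.Ioo 0 (arccos x) = Set.Ioo ((1 + x) / 2) 1 := by
  have hX : 0 < 1 + x := by linarith [hx.1]
  ext s
  constructor
  · rintro ⟨t, ht, rfl⟩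
    have hgt : x < cos t := by
      rw [← cos_arccos hx.1.le hx.2.le]
      exact cos_lt_cos_of_nonneg_of_le_pi ht.1.le (arccos_le_pi x) ht.2
    have hlt : cos t < 1 := by
      rw [← cos_zero]
      exact cos_lt_cos_of_nonneg_of_le_pi le_rfl (ht.2.le.trans (arccos_le_pi x)) ht.1
    refine ⟨div_lt_div_of_pos_left hX (by linarith) (by linarith), ?_⟩
    exact (div_lt_one (by linarith)).mpr (by linarith)
  · intro hs
    have hs₀ : 0 < s := by linarith [hs.1]
    have hlt : (1 + x) / s - 1 < 1 := by
      rw [sub_lt_iff_lt_add, div_lt_iff₀ hs₀]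
      linarith [hs.1]
    have hgt : x < (1 + x) / s - 1 := by
      rw [lt_sub_iff_add_lt, lt_div_iff₀ hs₀]
      nlinarith [hs.2]
    refine ⟨arccos ((1 + x) / s - 1),
      ⟨arccos_pos.mpr hlt, arccos_lt_arccos hx.1.le hgt hlt.le⟩, ?_⟩
    beta_reduce
    rw [cos_arccos (by linarith [hx.1]) hlt.le, add_sub_cancel, div_div_cancel₀ hX.ne']

lemma mul_eulerKernel_div_one_add_cosh (ν : ℂ) {x t : ℝ} (hx : -1 < x) (ht : 0 < t) :
    (((1 + x) * |sinh t| / (1 + cosh t) ^ 2 : ℝ) : ℂ) *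
        eulerKernel ν (eulerRoot x ((1 + x) / (1 + cosh t))) ((1 + x) / (1 + cosh t)) =
      2 ^ (-ν) * ((1 + x : ℝ) : ℂ) ^ (ν + 1) *
        (Complex.exp (-(ν + 1 / 2) * t) * ((1 / √(2 * (cosh t - x)) : ℝ) : ℂ)) := by
  have hX : 0 < 1 + x := by linarith
  have hc : 0 < cosh (t / 2) := cosh_pos _
  have hS : 0 < sinh (t / 2) := sinh_pos_iff.mpr (half_pos ht)
  have hsq := cosh_sq (t / 2)
  have hsinh : |sinh t| = 2 * sinh (t / 2) * cosh (t / 2) := by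
    rw [abs_of_pos (sinh_pos_iff.mpr ht), ← sinh_two_mul, mul_div_cancel₀ t two_ne_zero]
  have hcosh : 1 + cosh t = 2 * cosh (t / 2) ^ 2 := by
    rw [← mul_div_cancel₀ t two_ne_zero, cosh_two_mul, mul_div_cancel₀ t two_ne_zero]
    linarith
  have hL : Complex.exp ((t / 2 : ℝ) : ℂ) = cosh (t / 2) + 1 * sinh (t / 2) := by
    rw [← Complex.ofReal_exp, ← cosh_add_sinh, Complex.ofReal_add, one_mul]
  have hroot := eulerRoot_one_add_div (W := 1) hX.ne' hc hS
    (by rw [Complex.arg_one]; exact ⟨by linarith [pi_pos], pi_div_two_pos.le⟩)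
    (by rw [one_mul]; exact_mod_cast (by linarith))
  rw [hcosh, hsinh, hroot, mul_eulerKernel_eq hX hc hS.ne' hL (by simp [pi_pos, pi_nonneg]),
    inv_one, one_mul, ← hcosh, add_sub_add_left_eq_sub]
  congr 3
  push_cast
  ring

lemma mul_eulerKernel_div_one_add_cos (ν : ℂ) {x t : ℝ} (hx : -1 < x) (ht : t ∈ Set.Ioo 0 π) :
    (((1 + x) * |-sin t| / (1 + cos t) ^ 2 : ℝ) : ℂ) *
        eulerKernel ν (eulerRoot x ((1 + x) / (1 + cos t))) ((1 + x) / (1 + cos t)) =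
      2 ^ (-ν) * ((1 + x : ℝ) : ℂ) ^ (ν + 1) * -(Complex.I *
        (Complex.exp (Complex.I * -(ν + 1 / 2) * t) * ((1 / √(2 * (cos t - x)) : ℝ) : ℂ))) := by
  have hX : 0 < 1 + x := by linarith
  have hc : 0 < cos (t / 2) :=
    cos_pos_of_mem_Ioo ⟨by linarith [ht.1, pi_pos], by linarith [ht.2]⟩
  have hS : 0 < sin (t / 2) := sin_pos_of_mem_Ioo ⟨half_pos ht.1, by linarith [ht.2, pi_pos]⟩
  have hsq := sin_sq_add_cos_sq (t / 2)
  have hsin : |-sin t| = 2 * sin (t / 2) * cos (t / 2) := by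
    rw [abs_neg, abs_of_pos (sin_pos_of_mem_Ioo ht), ← sin_two_mul, mul_div_cancel₀ t two_ne_zero]
  have hcos : 1 + cos t = 2 * cos (t / 2) ^ 2 := by
    rw [cos_sq, mul_div_cancel₀ t two_ne_zero]
    ring
  have hL : Complex.exp (((t / 2 : ℝ) : ℂ) * Complex.I) =
      cos (t / 2) + Complex.I * sin (t / 2) := by
    rw [Complex.exp_mul_I, Complex.ofReal_cos, Complex.ofReal_sin, mul_comm Complex.I]
  have him : (((t / 2 : ℝ) : ℂ) * Complex.I).im ∈ Set.Ioc (-π) π := by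
    rw [Complex.im_ofReal_mul, Complex.I_im, mul_one]
    exact ⟨by linarith [ht.1, pi_pos], by linarith [ht.2, pi_pos]⟩
  have hroot := eulerRoot_one_add_div (W := Complex.I) hX.ne' hc hS (by simp [pi_pos])
    (by
      rw [mul_pow, Complex.I_sq]
      exact_mod_cast (by linarith : -1 * sin (t / 2) ^ 2 = cos (t / 2) ^ 2 - 1))
  rw [hcos, hsin, hroot, mul_eulerKernel_eq hX hc hS.ne' hL him, Complex.inv_I, ← hcos,
    add_sub_add_left_eq_sub, neg_mul]
  congr 4
  push_cast
  ring_nf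

lemma setIntegral_eulerKernel_eq_hyperbolicMehler (ν : ℂ) {x : ℝ} (hx : -1 < x) :
    ∫ s in Set.Ioo 0 ((1 + x) / 2), eulerKernel ν (eulerRoot x s) s =
      2 ^ (-ν) * ((1 + x : ℝ) : ℂ) ^ (ν + 1) * hyperbolicMehler (ν + 1 / 2) x := by
  have hX : 0 < 1 + x := by linarith
  rw [← image_div_one_add_cosh hX, setIntegral_image_div_one_add measurableSet_Ioi
    (fun t _ => hasDerivAt_cosh t) (cosh_injOn.mono Set.Ioi_subset_Ici_self)
    (fun t _ => by linarith [cosh_pos t]) hX, hyperbolicMehler,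
    ← MeasureTheory.integral_const_mul]
  exact setIntegral_congr_fun measurableSet_Ioi fun t ht =>
    mul_eulerKernel_div_one_add_cosh ν hx ht

lemma setIntegral_eulerKernel_eq_circularMehler (ν : ℂ) {x : ℝ} (hx : x ∈ Set.Ioo (-1) 1) :
    ∫ s in Set.Ioo ((1 + x) / 2) 1, eulerKernel ν (eulerRoot x s) s =
      2 ^ (-ν) * ((1 + x : ℝ) : ℂ) ^ (ν + 1) *
        -(Complex.I * circularMehler (-(ν + 1 / 2)) x) := by
  have hmem : ∀ t ∈ Set.Ioo 0 (arccos x), t ∈ Set.Ioo 0 π := fun t ht =>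
    ⟨ht.1, ht.2.trans_le (arccos_le_pi x)⟩
  have hpos : ∀ t ∈ Set.Ioo 0 (arccos x), 0 < 1 + cos t := fun t ht => by
    have hlt := cos_lt_cos_of_nonneg_of_le_pi ht.1.le le_rfl (hmem t ht).2
    rw [cos_pi] at hlt
    linarith
  rw [← image_div_one_add_cos hx, setIntegral_image_div_one_add measurableSet_Ioo
    (fun t _ => hasDerivAt_cos t)
    (injOn_cos.mono fun t ht => Set.Ioo_subset_Icc_self (hmem t ht)) hpos (by linarith [hx.1]),
    circularMehler, setIntegral_mul_one_div_sqrt_cos_sub (Set.Ioo_subset_Icc_self hx),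
    ← MeasureTheory.integral_const_mul, ← MeasureTheory.integral_neg,
    ← MeasureTheory.integral_const_mul]
  exact setIntegral_congr_fun measurableSet_Ioo fun t ht =>
    mul_eulerKernel_div_one_add_cos ν hx.1 (hmem t ht)

lemma eulerIntegral_ofReal {ν : ℂ} (hν : -1 < ν.re) {x : ℝ} (hx : x ∈ Set.Ioo (-1) 1) :
    eulerIntegral ν x = 2 ^ (-ν) * ((1 + x : ℝ) : ℂ) ^ (ν + 1) *
      (hyperbolicMehler (ν + 1 / 2) x - Complex.I * circularMehler (-(ν + 1 / 2)) x) := by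
  obtain ⟨g, hg, hbound⟩ := exists_integrable_bound_eulerKernel hν hx
  have hint : IntegrableOn (fun s => eulerKernel ν (eulerRoot x s) s) (Set.Ioo 0 1) := by
    refine Integrable.mono' hg (measurable_eulerKernel_eulerRoot ν x).aestronglyMeasurable ?_
    filter_upwards [ae_restrict_of_ae (Measure.ae_ne volume ((1 + x) / 2)),
      ae_restrict_mem measurableSet_Ioo] with s hne hs
    simpa using hbound 0 (by simp) s hs hne
  have hleft : 0 ≤ (1 + x) / 2 := by linarith [hx.1]
  have hright : (1 + x) / 2 ≤ 1 := by linarith [hx.2]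
  have hint' := (intervalIntegrable_iff_integrableOn_Ioo_of_le zero_le_one).mpr hint
  have hmem : (1 + x) / 2 ∈ Set.uIcc (0 : ℝ) 1 := Set.mem_uIcc_of_le hleft hright
  rw [eulerIntegral, ← integral_Ioc_eq_integral_Ioo, ← integral_of_le zero_le_one,
    ← integral_add_adjacent_intervals (hint'.mono_set (Set.uIcc_subset_uIcc_left hmem))
      (hint'.mono_set (Set.uIcc_subset_uIcc_right hmem)), integral_of_le hleft,
    integral_of_le hright, integral_Ioc_eq_integral_Ioo, integral_Ioc_eq_integral_Ioo,
    setIntegral_eulerKernel_eq_hyperbolicMehler ν hx.1,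
    setIntegral_eulerKernel_eq_circularMehler ν hx, ← mul_add, ← sub_eq_add_neg]

/-! ### Cauchy's formula on the unit circle with a boundary singularity -/

/-- Multiplying by `exp (-I * θ / 2)` makes the real part of `1 + r * exp (I * θ)` equal to
`(1 + r) * cos (θ / 2)`. -/
lemma abs_sub_pi_div_pi_le_norm_one_add_circleMap {r θ : ℝ} (hr : 0 ≤ r)
    (hθ : θ ∈ Set.Icc 0 (2 * π)) : |θ - π| / π ≤ ‖1 + circleMap 0 r θ‖ := by
  have hsin : |θ - π| / π ≤ |cos (θ / 2)| := by
    have hhalf : |(π - θ) / 2| ≤ π / 2 := by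
      rw [abs_le]
      constructor <;> linarith [hθ.1, hθ.2]
    have hjordan := mul_abs_le_abs_sin hhalf
    rw [sub_div, sin_pi_div_two_sub, ← sub_div, abs_div, abs_sub_comm, abs_two] at hjordan
    exact (Eq.trans_le (by field_simp) hjordan)
  have hre : ((1 + circleMap 0 r θ) * Complex.exp ((-(θ / 2) : ℝ) * Complex.I)).re =
      (1 + r) * cos (θ / 2) := by
    rw [circleMap_zero, add_mul, one_mul, mul_assoc, ← Complex.exp_add, ← add_mul,
      ← Complex.ofReal_add, Complex.add_re, Complex.re_ofReal_mul, Complex.exp_ofReal_mul_I_re,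
      Complex.exp_ofReal_mul_I_re, cos_neg, ← sub_eq_add_neg, sub_half]
    ring
  calc |θ - π| / π ≤ 1 * |cos (θ / 2)| := by rwa [one_mul]
    _ ≤ |(1 + r) * cos (θ / 2)| := by
        rw [abs_mul]
        gcongr
        exact (le_abs_self _).trans' (by linarith)
    _ ≤ ‖1 + circleMap 0 r θ‖ := by
        rw [← hre]
        refine (Complex.abs_re_le_norm _).trans_eq ?_
        rw [norm_mul, Complex.norm_exp_ofReal_mul_I, mul_one]

lemma integral_circleMap_div_sub_mul {G : ℂ → ℂ} {r : ℝ}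
    (hG : DifferentiableOn ℂ G (Metric.closedBall 0 r)) {q₀ : ℂ} (hq₀ : ‖q₀‖ < r) :
    ∫ θ in (0 : ℝ)..2 * π, circleMap 0 r θ / (circleMap 0 r θ - q₀) * G (circleMap 0 r θ) =
      2 * π * G q₀ := by
  have hcauchy := hG.circleIntegral_sub_inv_smul (mem_ball_zero_iff.mpr hq₀)
  simp only [circleIntegral, deriv_circleMap, smul_eq_mul] at hcauchy
  refine mul_left_cancel₀ Complex.I_ne_zero ?_
  rw [← intervalIntegral.integral_const_mul, ← mul_assoc, mul_comm Complex.I, ← hcauchy]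
  congr 1 with θ
  ring

lemma sub_norm_le_norm_circleMap_sub (r θ : ℝ) (q₀ : ℂ) :
    r - ‖q₀‖ ≤ ‖circleMap 0 r θ - q₀‖ := by
  refine (norm_sub_norm_le _ _).trans' ?_
  rw [norm_circleMap_zero]
  exact sub_le_sub_right (le_abs_self r) _

lemma circleMap_sub_ne_zero {r : ℝ} {q₀ : ℂ} (hq₀ : ‖q₀‖ < r) (θ : ℝ) :
    circleMap 0 r θ - q₀ ≠ 0 :=
  norm_pos_iff.mp ((sub_pos.mpr hq₀).trans_le (sub_norm_le_norm_circleMap_sub r θ q₀))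

lemma continuous_circleMap_div_sub_mul {G : ℂ → ℂ} {r : ℝ}
    (hG : ContinuousOn G (Metric.closedBall 0 r)) {q₀ : ℂ} (hq₀ : ‖q₀‖ < r) :
    Continuous fun θ => circleMap 0 r θ / (circleMap 0 r θ - q₀) * G (circleMap 0 r θ) :=
  ((continuous_circleMap 0 r).div ((continuous_circleMap 0 r).sub continuous_const)
    (circleMap_sub_ne_zero hq₀)).mul <| hG.comp_continuous (continuous_circleMap 0 r) fun θ =>
      circleMap_mem_closedBall 0 ((norm_nonneg q₀).trans hq₀.le) θ

lemma tendsto_circleMap_radius (r θ : ℝ) :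
    Tendsto (fun r => circleMap 0 r θ) (𝓝[<] r) (𝓝 (circleMap 0 r θ)) :=
  ((by unfold circleMap; fun_prop : Continuous fun r => circleMap 0 r θ).tendsto r).mono_left
    nhdsWithin_le_nhds

theorem integral_circleMap_div_sub_mul_of_tendsto_radial {G : ℂ → ℂ} {F : ℝ → ℂ} {g : ℝ → ℝ}
    (hG : DifferentiableOn ℂ G (Metric.ball 0 1)) {q₀ : ℂ} (hq₀ : ‖q₀‖ < 1)
    (hg : IntervalIntegrable g volume 0 (2 * π))
    (hbound : ∀ᶠ r in 𝓝[<] (1 : ℝ), ∀ᵐ θ : ℝ, θ ∈ Set.uIoc 0 (2 * π) →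
      ‖G (circleMap 0 r θ)‖ ≤ g θ)
    (hlim : ∀ᵐ θ : ℝ, θ ∈ Set.uIoc 0 (2 * π) →
      Tendsto (fun r => G (circleMap 0 r θ)) (𝓝[<] 1) (𝓝 (F θ))) :
    ∫ θ in (0 : ℝ)..2 * π, circleMap 0 1 θ / (circleMap 0 1 θ - q₀) * F θ = 2 * π * G q₀ := by
  obtain ⟨ρ, hρ₀, hρ₁⟩ := exists_between hq₀
  have hnear : ∀ᶠ r in 𝓝[<] (1 : ℝ), r ∈ Set.Ioo ρ 1 := Ioo_mem_nhdsLT hρ₁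
  have hGr : ∀ r ∈ Set.Ioo ρ 1, DifferentiableOn ℂ G (Metric.closedBall 0 r) := fun r hr =>
    hG.mono (Metric.closedBall_subset_ball hr.2)
  refine tendsto_nhds_unique (tendsto_integral_filter_of_dominated_convergence
    (fun θ => 1 / (ρ - ‖q₀‖) * g θ) ?_ ?_ (hg.const_mul _) ?_) (tendsto_const_nhds.congr' ?_)
    (f := fun r => ∫ θ in (0 : ℝ)..2 * π,
      circleMap 0 r θ / (circleMap 0 r θ - q₀) * G (circleMap 0 r θ)) (l := 𝓝[<] 1)
  · filter_upwards [hnear] with r hr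
    exact (continuous_circleMap_div_sub_mul (hGr r hr).continuousOn
      (hρ₀.trans hr.1)).aestronglyMeasurable
  · filter_upwards [hnear, hbound] with r hr hboundr
    filter_upwards [hboundr] with θ hθ hmem
    rw [norm_mul, norm_div, norm_circleMap_zero, abs_of_nonneg ((norm_nonneg q₀).trans
      (hρ₀.trans hr.1).le)]
    have hge := sub_norm_le_norm_circleMap_sub r θ q₀
    gcongr
    · exact hr.2.le
    · exact (sub_le_sub_right hr.1.le _).trans hge
    · exact hθ hmem
  · filter_upwards [hlim] with θ hθ hmem
    have hrad := tendsto_circleMap_radius 1 θ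
    exact (hrad.div (hrad.sub_const q₀) (circleMap_sub_ne_zero hq₀ θ)).mul (hθ hmem)
  · filter_upwards [hnear] with r hr
    exact (integral_circleMap_div_sub_mul (hGr r hr) (hρ₀.trans hr.1)).symm

lemma one_add_mem_slitPlane {q : ℂ} (hq : ‖q‖ ≤ 1) (hne : 1 + q ≠ 0) :
    1 + q ∈ Complex.slitPlane := by
  rw [Complex.mem_slitPlane_iff_not_le_zero, Complex.nonpos_iff]
  rintro ⟨hre, him⟩
  refine hne (Complex.ext ?_ him)
  rw [Complex.zero_re]
  refine le_antisymm hre ?_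
  rw [Complex.add_re, Complex.one_re]
  linarith [(abs_le.mp ((Complex.abs_re_le_norm q).trans hq)).1]

lemma one_sub_norm_le_norm_one_sub_mul (q₀ : ℂ) {q : ℂ} (hq : ‖q‖ ≤ 1) :
    1 - ‖q₀‖ ≤ ‖1 - q₀ * q‖ := by
  have hsub := norm_sub_norm_le 1 (q₀ * q)
  rw [norm_one, norm_mul] at hsub
  linarith [mul_le_of_le_one_right (norm_nonneg q₀) hq]

lemma one_sub_mul_ne_zero {q₀ q : ℂ} (hq₀ : ‖q₀‖ < 1) (hq : ‖q‖ ≤ 1) : 1 - q₀ * q ≠ 0 :=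
  norm_pos_iff.mp ((sub_pos.mpr hq₀).trans_le (one_sub_norm_le_norm_one_sub_mul q₀ hq))

lemma norm_cpow_mul_pow_div_one_sub_mul_le (a : ℂ) (n : ℕ) {q₀ q : ℂ} (hq₀ : ‖q₀‖ < 1)
    (hq : ‖q‖ ≤ 1) {t : ℝ} (ht : 0 < t) (htq : t ≤ ‖1 + q‖) :
    ‖(1 + q) ^ a * q ^ n / (1 - q₀ * q)‖ ≤
      2 ^ max a.re 0 * exp (π * |a.im|) * (1 - ‖q₀‖)⁻¹ * t ^ min a.re 0 := by
  have hpos : 0 < ‖1 + q‖ := ht.trans_le htq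
  have htwo : ‖1 + q‖ ≤ 2 := (norm_add_le _ _).trans (by rw [norm_one]; linarith)
  have hrpow : ‖1 + q‖ ^ a.re ≤ 2 ^ max a.re 0 * t ^ min a.re 0 := by
    rw [← add_zero a.re, ← max_add_min a.re 0, rpow_add hpos, max_add_min, add_zero]
    exact mul_le_mul (rpow_le_rpow hpos.le htwo (le_max_right _ _))
      (rpow_le_rpow_of_nonpos ht htq (min_le_right _ _)) (by positivity) (by positivity)
  have hexp : exp (-((1 + q).arg * a.im)) ≤ exp (π * |a.im|) := by
    refine exp_le_exp.mpr ((neg_le_abs _).trans ?_)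
    rw [abs_mul]
    exact mul_le_mul_of_nonneg_right (Complex.abs_arg_le_pi _) (abs_nonneg _)
  have hinv : ‖1 - q₀ * q‖⁻¹ ≤ (1 - ‖q₀‖)⁻¹ :=
    inv_anti₀ (sub_pos.mpr hq₀) (one_sub_norm_le_norm_one_sub_mul q₀ hq)
  have hqn : ‖q‖ ^ n ≤ 1 := pow_le_one₀ (norm_nonneg _) hq
  have hcpow := Complex.norm_cpow_le (1 + q) a
  rw [div_eq_mul_inv, ← exp_neg] at hcpow
  rw [norm_div, norm_mul, norm_pow, div_eq_mul_inv]
  calc _ ≤ 2 ^ max a.re 0 * t ^ min a.re 0 * exp (π * |a.im|) * 1 * (1 - ‖q₀‖)⁻¹ := by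
        gcongr
        exact hcpow.trans (by gcongr)
    _ = _ := by ring

lemma intervalIntegrable_const_mul_abs_sub_pi_div_rpow {r : ℝ} (hr : -1 < r) (C a b : ℝ) :
    IntervalIntegrable (fun θ => C * (|θ - π| / π) ^ r) volume a b := by
  simp only [div_eq_mul_inv, mul_rpow (abs_nonneg _) (inv_nonneg.mpr pi_pos.le)]
  exact ((intervalIntegrable_abs_sub_rpow hr π a b).mul_const _).const_mul C

lemma ae_mem_uIoc_zero_two_pi {p : ℝ → Prop}
    (h : ∀ θ ∈ Set.Icc 0 (2 * π), θ ≠ π → p θ) : ∀ᵐ θ : ℝ, θ ∈ Set.uIoc 0 (2 * π) → p θ := by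
  filter_upwards [Measure.ae_ne volume π] with θ hne hθ
  exact h θ (Set.Ioc_subset_Icc_self (Set.uIoc_of_le two_pi_pos.le ▸ hθ)) hne

lemma one_add_circleMap_ne_zero {r θ : ℝ} (hr : 0 ≤ r) (hθ : θ ∈ Set.Icc 0 (2 * π))
    (hne : θ ≠ π) : 1 + circleMap 0 r θ ≠ 0 :=
  norm_pos_iff.mp ((div_pos (abs_pos.mpr (sub_ne_zero.mpr hne)) pi_pos).trans_le
    (abs_sub_pi_div_pi_le_norm_one_add_circleMap hr hθ))

lemma exists_intervalIntegrable_bound_circleMap_cpow_mul_pow {a : ℂ} (ha : -1 < a.re) (n : ℕ)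
    {q₀ : ℂ} (hq₀ : ‖q₀‖ < 1) :
    ∃ g : ℝ → ℝ, IntervalIntegrable g volume 0 (2 * π) ∧
      ∀ r ∈ Set.Icc (0 : ℝ) 1, ∀ θ ∈ Set.Icc 0 (2 * π), θ ≠ π →
        ‖(1 + circleMap 0 r θ) ^ a * circleMap 0 r θ ^ n / (1 - q₀ * circleMap 0 r θ)‖ ≤ g θ :=
  ⟨_, intervalIntegrable_const_mul_abs_sub_pi_div_rpow (lt_min ha neg_one_lt_zero) _ _ _,
    fun r hr θ hθ hne => norm_cpow_mul_pow_div_one_sub_mul_le a n hq₀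
      (by rw [norm_circleMap_zero, abs_of_nonneg hr.1]; exact hr.2)
      (div_pos (abs_pos.mpr (sub_ne_zero.mpr hne)) pi_pos)
      (abs_sub_pi_div_pi_le_norm_one_add_circleMap hr.1 hθ)⟩

lemma intervalIntegrable_circleMap_cpow_mul_pow {a : ℂ} (ha : -1 < a.re) (n : ℕ) {q₀ : ℂ}
    (hq₀ : ‖q₀‖ < 1) :
    IntervalIntegrable (fun θ => circleMap 0 1 θ / (circleMap 0 1 θ - q₀) *
      ((1 + circleMap 0 1 θ) ^ a * circleMap 0 1 θ ^ n / (1 - q₀ * circleMap 0 1 θ)))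
      volume 0 (2 * π) := by
  obtain ⟨g, hg, hbound⟩ := exists_intervalIntegrable_bound_circleMap_cpow_mul_pow ha n hq₀
  refine IntervalIntegrable.continuousOn_mul (hg.mono_fun' (Measurable.aestronglyMeasurable
    (by unfold circleMap; fun_prop)) ((ae_restrict_iff' measurableSet_uIoc).mpr
      (ae_mem_uIoc_zero_two_pi fun θ hθ hne => ?_))) (((continuous_circleMap 0 1).div
    ((continuous_circleMap 0 1).sub continuous_const) (circleMap_sub_ne_zero hq₀)).continuousOn)
  exact hbound 1 ⟨zero_le_one, le_rfl⟩ θ hθ hne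

lemma integral_circleMap_cpow_mul_pow {a : ℂ} (ha : -1 < a.re) (n : ℕ) {q₀ : ℂ}
    (hq₀ : ‖q₀‖ < 1) :
    ∫ θ in (0 : ℝ)..2 * π, circleMap 0 1 θ / (circleMap 0 1 θ - q₀) *
      ((1 + circleMap 0 1 θ) ^ a * circleMap 0 1 θ ^ n / (1 - q₀ * circleMap 0 1 θ)) =
    2 * π * ((1 + q₀) ^ a * q₀ ^ n / (1 - q₀ * q₀)) := by
  obtain ⟨g, hg, hbound⟩ := exists_intervalIntegrable_bound_circleMap_cpow_mul_pow ha n hq₀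
  refine integral_circleMap_div_sub_mul_of_tendsto_radial
    (G := fun q => (1 + q) ^ a * q ^ n / (1 - q₀ * q)) (fun q hq => ?_) hq₀ hg ?_
    (ae_mem_uIoc_zero_two_pi fun θ hθ hne => ?_)
  · have hq₁ : ‖q‖ < 1 := mem_ball_zero_iff.mp hq
    have hslit : 1 + q ∈ Complex.slitPlane := one_add_mem_slitPlane hq₁.le fun h => by
      rw [← neg_eq_of_add_eq_zero_right h, norm_neg, norm_one] at hq₁
      exact hq₁.false
    exact (((((differentiableAt_id.const_add 1).cpow_const hslit).mul
      (differentiableAt_id.pow n)).div ((differentiableAt_id.const_mul q₀).const_sub 1)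
      (one_sub_mul_ne_zero hq₀ hq₁.le)).differentiableWithinAt)
  · filter_upwards [Ioo_mem_nhdsLT zero_lt_one] with r hr
    exact ae_mem_uIoc_zero_two_pi (hbound r (Set.Ioo_subset_Icc_self hr))
  · have hq₁ : ‖circleMap 0 1 θ‖ ≤ 1 := by rw [norm_circleMap_zero, abs_one]
    have hslit := one_add_mem_slitPlane hq₁ (one_add_circleMap_ne_zero zero_le_one hθ hne)
    have hrad := tendsto_circleMap_radius 1 θ
    exact (((hrad.const_add 1).cpow tendsto_const_nhds hslit).mul (hrad.pow n)).div
      ((hrad.const_mul q₀).const_sub 1) (one_sub_mul_ne_zero hq₀ hq₁)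

/-! ### Evaluation of the angular integral -/

lemma eulerRoot_re_pos {z : ℂ} (hz : z.im ≠ 0) {s : ℝ} (hs : s ≠ 0) : 0 < (eulerRoot z s).re := by
  have hnormSq : Complex.normSq (1 + z) ≠ 0 := fun h =>
    hz (by simpa using congrArg Complex.im (Complex.normSq_eq_zero.mp h))
  have him : (1 - 2 * s / (1 + z)).im ≠ 0 := by
    rw [← Complex.ofReal_ofNat, ← Complex.ofReal_mul, div_eq_mul_inv, Complex.sub_im,
      Complex.im_ofReal_mul, Complex.inv_im]
    simp [hnormSq, hz, hs]
  have hre := (abs_lt.mp (Complex.abs_re_lt_norm.mpr him)).1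
  rw [eulerRoot, Complex.cpow_inv_two_re]
  exact sqrt_pos.mpr (by linarith)

lemma one_add_ne_zero_of_re_pos {w : ℂ} (hw : 0 < w.re) : 1 + w ≠ 0 := fun h => by
  have hre := congrArg Complex.re h
  rw [Complex.add_re, Complex.one_re, Complex.zero_re] at hre
  linarith

lemma norm_one_sub_div_one_add_lt_one {w : ℂ} (hw : 0 < w.re) : ‖(1 - w) / (1 + w)‖ < 1 := by
  rw [norm_div, div_lt_one (norm_pos_iff.mpr (one_add_ne_zero_of_re_pos hw))]
  refine lt_of_pow_lt_pow_left₀ 2 (norm_nonneg _) ?_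
  rw [← Complex.normSq_eq_norm_sq, ← Complex.normSq_eq_norm_sq, Complex.normSq_apply,
    Complex.normSq_apply]
  simp only [Complex.sub_re, Complex.add_re, Complex.sub_im, Complex.add_im, Complex.one_re,
    Complex.one_im]
  linarith

lemma one_add_one_sub_div_one_add_cpow {w : ℂ} (hw : 0 < w.re) (a : ℂ) :
    (1 + (1 - w) / (1 + w)) ^ a = 2 ^ a * (1 + w) ^ (-a) := by
  have hne := one_add_ne_zero_of_re_pos hw
  have harg : (1 + w).arg ≠ π := fun h => by
    have hre := (Complex.arg_eq_pi_iff.mp h).1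
    rw [Complex.add_re, Complex.one_re] at hre
    linarith
  have hlog : Complex.log (2 * (1 + w)⁻¹) = Complex.log 2 + Complex.log (1 + w)⁻¹ := by
    have h := Complex.log_ofReal_mul two_pos (inv_ne_zero hne)
    rwa [Complex.ofReal_log two_pos.le, Complex.ofReal_ofNat] at h
  rw [show 1 + (1 - w) / (1 + w) = 2 * (1 + w)⁻¹ by field_simp; ring, Complex.cpow_neg,
    ← Complex.inv_cpow _ _ harg, Complex.cpow_def_of_ne_zero (by simpa using hne), hlog,
    Complex.cpow_def_of_ne_zero two_ne_zero, Complex.cpow_def_of_ne_zero (inv_ne_zero hne),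
    ← Complex.exp_add, add_mul]

lemma ofReal_cos_eq_circleMap (θ : ℝ) :
    (cos θ : ℂ) = (circleMap 0 1 θ + (circleMap 0 1 θ)⁻¹) / 2 := by
  rw [circleMap_zero, Complex.ofReal_one, one_mul, Complex.ofReal_cos, Complex.cos,
    ← Complex.exp_neg, neg_mul]

/-- The two zeros of the denominator, as a function of `q = exp (I * θ)`, are the images
`(1 - w) / (1 + w)` and `(1 + w) / (1 - w)` of the two square roots of `1 - 2 * s / (1 + z)`. -/
lemma one_add_sub_mul_one_add_cos_eq {z w : ℂ} (hz : z.im ≠ 0) {s : ℝ}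
    (hw : w ^ 2 = 1 - 2 * s / (1 + z)) (hne : 1 + w ≠ 0) (θ : ℝ) :
    1 + z - (s * (1 + cos θ) : ℝ) = (1 + z) * (1 + w) ^ 2 / 4 *
      ((circleMap 0 1 θ - (1 - w) / (1 + w)) * (1 - (1 - w) / (1 + w) * circleMap 0 1 θ) /
        circleMap 0 1 θ) := by
  have hq : circleMap 0 1 θ ≠ 0 := circleMap_ne_center one_ne_zero
  have hZ : 1 + z ≠ 0 := fun h => hz (by simpa using congrArg Complex.im h)
  have hsw : 2 * (s : ℂ) = (1 - w ^ 2) * (1 + z) := by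
    rw [hw]
    field_simp
    ring
  rw [Complex.ofReal_mul, Complex.ofReal_add, Complex.ofReal_one, ofReal_cos_eq_circleMap]
  field_simp
  linear_combination (-2 * (1 + circleMap 0 1 θ) ^ 2) * hsw

lemma one_add_circleMap_cpow {θ : ℝ} (hθ : |θ| < π) (a : ℂ) :
    (1 + circleMap 0 1 θ) ^ a =
      ((2 * cos (θ / 2) : ℝ) : ℂ) ^ a * Complex.exp (a * (θ / 2) * Complex.I) := by
  obtain ⟨hlower, hupper⟩ := abs_lt.mp hθ
  have hcos : 0 < 2 * cos (θ / 2) :=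
    mul_pos two_pos (cos_pos_of_mem_Ioo ⟨by linarith, by linarith⟩)
  have hfactor : 1 + circleMap 0 1 θ =
      ((2 * cos (θ / 2) : ℝ) : ℂ) * Complex.exp ((θ / 2 : ℝ) * Complex.I) := by
    rw [circleMap_zero, Complex.ofReal_one, one_mul]
    push_cast
    rw [Complex.two_cos, add_mul, ← Complex.exp_add, ← Complex.exp_add, ← add_mul, ← add_mul,
      add_halves, neg_add_cancel, zero_mul, Complex.exp_zero, add_comm]
  rw [hfactor, Complex.cpow_def_of_ne_zero (mul_ne_zero (by exact_mod_cast hcos.ne')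
    (Complex.exp_ne_zero _)), Complex.log_ofReal_mul hcos (Complex.exp_ne_zero _),
    Complex.log_exp (by simp; linarith) (by simp; linarith), cpow_eq_exp_mul_log hcos,
    ← Complex.exp_add]
  push_cast
  ring_nf

lemma two_mul_cos_half_cpow {θ : ℝ} (hθ : |θ| < π) (a : ℂ) :
    ((2 * cos (θ / 2) : ℝ) : ℂ) ^ (2 * a) = 2 ^ a * ((1 + cos θ : ℝ) : ℂ) ^ a := by
  obtain ⟨hlower, hupper⟩ := abs_lt.mp hθ
  have hcos : 0 < cos (θ / 2) := cos_pos_of_mem_Ioo ⟨by linarith, by linarith⟩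
  have hsq : 2 * (1 + cos θ) = (2 * cos (θ / 2)) ^ 2 := by
    rw [← mul_div_cancel₀ θ two_ne_zero, cos_two_mul, mul_div_cancel₀ θ two_ne_zero]
    ring
  have hone : 0 ≤ 1 + cos θ := by linarith [neg_one_le_cos θ]
  rw [← Complex.ofReal_ofNat 2, ← Complex.mul_cpow_ofReal_nonneg two_pos.le hone,
    ← Complex.ofReal_mul, hsq, cpow_eq_exp_mul_log (by positivity),
    cpow_eq_exp_mul_log (by positivity), log_pow]
  push_cast
  ring_nf

lemma one_add_circleMap_cpow_mul_pow {θ : ℝ} (hθ : |θ| < π) (a : ℂ) (n : ℕ) :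
    (1 + circleMap 0 1 θ) ^ (2 * a) * circleMap 0 1 θ ^ n =
      2 ^ a * ((1 + cos θ : ℝ) : ℂ) ^ a * Complex.exp ((a + n) * θ * Complex.I) := by
  rw [one_add_circleMap_cpow hθ, two_mul_cos_half_cpow hθ, circleMap_zero, Complex.ofReal_one,
    one_mul, ← Complex.exp_nat_mul, mul_assoc _ (Complex.exp _), ← Complex.exp_add]
  ring_nf

lemma circleMap_cpow_mul_pow_add_reflect {β : ℝ} (hβ : β ∈ Set.Ioo 0 π) (a : ℂ) (n : ℕ) :
    (1 + circleMap 0 1 β) ^ (2 * a) * circleMap 0 1 β ^ n +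
      (1 + circleMap 0 1 (2 * π - β)) ^ (2 * a) * circleMap 0 1 (2 * π - β) ^ n =
    2 * 2 ^ a * (Complex.cos ((a + n) * β) * ((1 + cos β : ℝ) : ℂ) ^ a) := by
  have habs : |β| < π := by rw [abs_of_pos hβ.1]; exact hβ.2
  rw [sub_eq_neg_add, periodic_circleMap, one_add_circleMap_cpow_mul_pow habs,
    one_add_circleMap_cpow_mul_pow (abs_neg β ▸ habs), cos_neg, ← mul_add, Complex.ofReal_neg,
    mul_neg, Complex.cos]
  ring

lemma integral_zero_two_mul_eq_setIntegral_add_reflect {h : ℝ → ℂ} {c : ℝ} (hc : 0 ≤ c)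
    (hh : IntervalIntegrable h volume 0 (2 * c)) :
    ∫ θ in (0 : ℝ)..2 * c, h θ = ∫ θ in Set.Ioo 0 c, (h θ + h (2 * c - θ)) := by
  have hleft : IntervalIntegrable h volume 0 c := hh.mono_set (by
    rw [Set.uIcc_of_le hc, Set.uIcc_of_le (by linarith)]
    exact Set.Icc_subset_Icc le_rfl (by linarith))
  have hright : IntervalIntegrable h volume c (2 * c) := hh.mono_set (by
    rw [Set.uIcc_of_le (by linarith), Set.uIcc_of_le (by linarith)]
    exact Set.Icc_subset_Icc hc le_rfl)
  have hreflect : IntervalIntegrable (fun θ => h (2 * c - θ)) volume 0 c := by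
    have hcomp := (hright.comp_sub_left (2 * c)).symm
    rwa [sub_self, two_mul, add_sub_cancel_right, ← two_mul] at hcomp
  rw [← integral_add_adjacent_intervals hleft hright, ← integral_Ioc_eq_integral_Ioo,
    ← intervalIntegral.integral_of_le hc, intervalIntegral.integral_add hleft hreflect,
    intervalIntegral.integral_comp_sub_left, sub_zero, two_mul, add_sub_cancel_right]

lemma circleMap_cpow_mul_pow_div_eq {z : ℂ} (hz : z.im ≠ 0) {s : ℝ} (hs : s ≠ 0) (a : ℂ) (n : ℕ)
    (θ : ℝ) :
    (1 + circleMap 0 1 θ) ^ a * circleMap 0 1 θ ^ n / (1 + z - (s * (1 + cos θ) : ℝ)) =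
      4 / ((1 + z) * (1 + eulerRoot z s) ^ 2) * (circleMap 0 1 θ /
        (circleMap 0 1 θ - (1 - eulerRoot z s) / (1 + eulerRoot z s)) *
          ((1 + circleMap 0 1 θ) ^ a * circleMap 0 1 θ ^ n /
            (1 - (1 - eulerRoot z s) / (1 + eulerRoot z s) * circleMap 0 1 θ))) := by
  rw [one_add_sub_mul_one_add_cos_eq hz (eulerRoot_sq z s)
    (one_add_ne_zero_of_re_pos (eulerRoot_re_pos hz hs))]
  simp only [div_eq_mul_inv, mul_inv_rev, inv_inv]
  ring

lemma intervalIntegrable_circleMap_cpow_mul_pow_div {z : ℂ} (hz : z.im ≠ 0) {s : ℝ} (hs : s ≠ 0)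
    {a : ℂ} (ha : -1 < a.re) (n : ℕ) :
    IntervalIntegrable (fun θ => (1 + circleMap 0 1 θ) ^ a * circleMap 0 1 θ ^ n /
      (1 + z - (s * (1 + cos θ) : ℝ))) volume 0 (2 * π) := by
  simp only [circleMap_cpow_mul_pow_div_eq hz hs]
  exact (intervalIntegrable_circleMap_cpow_mul_pow ha n
    (norm_one_sub_div_one_add_lt_one (eulerRoot_re_pos hz hs))).const_mul _

lemma integral_circleMap_cpow_mul_pow_div {z : ℂ} (hz : z.im ≠ 0) {s : ℝ} (hs : s ≠ 0)
    {a : ℂ} (ha : -1 < a.re) (n : ℕ) :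
    ∫ θ in (0 : ℝ)..2 * π, (1 + circleMap 0 1 θ) ^ a * circleMap 0 1 θ ^ n /
      (1 + z - (s * (1 + cos θ) : ℝ)) =
    2 * π * 2 ^ (a + n) * s ^ n * ((1 + z) ^ (n + 1))⁻¹ *
      ((1 + eulerRoot z s) ^ (-a - (2 * n : ℕ)) * (eulerRoot z s)⁻¹) := by
  have hwre := eulerRoot_re_pos hz hs
  have hZ : 1 + z ≠ 0 := fun h => hz (by simpa using congrArg Complex.im h)
  have hsq := eulerRoot_sq z s
  simp only [circleMap_cpow_mul_pow_div_eq hz hs]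
  set w := eulerRoot z s
  have hne := one_add_ne_zero_of_re_pos hwre
  have hw₀ : w ≠ 0 := fun h => hwre.ne' (by rw [h, Complex.zero_re])
  have hq₀ : (1 - w) / (1 + w) = 2 * s / ((1 + z) * (1 + w) ^ 2) := by
    field_simp
    field_simp at hsq
    linear_combination -hsq
  have hden : 1 - (1 - w) / (1 + w) * ((1 - w) / (1 + w)) = 4 * w / (1 + w) ^ 2 := by
    field_simp
    ring
  rw [intervalIntegral.integral_const_mul, integral_circleMap_cpow_mul_pow ha n
    (norm_one_sub_div_one_add_lt_one hwre), one_add_one_sub_div_one_add_cpow hwre, hden, hq₀,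
    Complex.cpow_sub _ _ hne, Complex.cpow_natCast, Complex.cpow_add _ _ two_ne_zero,
    Complex.cpow_natCast, div_pow, mul_pow, mul_pow, ← pow_mul, pow_succ (1 + z)]
  field_simp

theorem setIntegral_cos_mul_one_add_cos_cpow_div {z : ℂ} (hz : z.im ≠ 0) {s : ℝ} (hs : s ≠ 0)
    {a : ℂ} (ha : -1 < 2 * a.re) (n : ℕ) :
    ∫ β in Set.Ioo 0 π, Complex.cos ((a + n) * β) * ((1 + cos β : ℝ) : ℂ) ^ a /
      (1 + z - (s * (1 + cos β) : ℝ)) =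
    π * 2 ^ (a + n) * s ^ n * ((1 + z) ^ (n + 1))⁻¹ *
      ((1 + eulerRoot z s) ^ (-2 * (a + n)) * (eulerRoot z s)⁻¹) := by
  have ha' : -1 < (2 * a).re := by simpa using ha
  have hfold := integral_zero_two_mul_eq_setIntegral_add_reflect pi_pos.le
    (intervalIntegrable_circleMap_cpow_mul_pow_div hz hs ha' n)
  rw [integral_circleMap_cpow_mul_pow_div hz hs ha' n] at hfold
  simp only [cos_two_pi_sub, ← add_div] at hfold
  rw [setIntegral_congr_fun measurableSet_Ioo fun β hβ => by
      rw [circleMap_cpow_mul_pow_add_reflect hβ, mul_div_assoc],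
    MeasureTheory.integral_const_mul] at hfold
  have htwo : (2 : ℂ) ^ a ≠ 0 := fun h => two_ne_zero ((Complex.cpow_eq_zero_iff _ _).mp h).1
  have hexp : -(2 * a) - ((2 * n : ℕ) : ℂ) = -2 * (a + n) := by
    push_cast
    ring
  refine mul_left_cancel₀ (mul_ne_zero two_ne_zero htwo) (hfold.symm.trans ?_)
  rw [hexp, show 2 * a + n = a + (a + n) by ring, Complex.cpow_add _ _ two_ne_zero]
  ring

/-! ### The Cauchy transform of `(1 + ξ) ^ (ν - n) * P_ν(ξ)` -/

lemma setIntegral_Ioo_neg_one_one_eq {E : Type*} [NormedAddCommGroup E] [NormedSpace ℝ E]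
    {g : ℝ → E} {c : ℝ} (hc : c ∈ Set.Ioc (-1) 1) (hg : ∀ ξ, c ≤ ξ → g ξ = 0) :
    ∫ ξ in Set.Ioo (-1) 1, g ξ = ∫ s in Set.Ioo (0 : ℝ) 1, (1 + c) • g ((1 + c) * s + -1) := by
  rw [setIntegral_eq_of_subset_of_forall_sdiff_eq_zero measurableSet_Ioo
      (Set.Ioo_subset_Ioo_right hc.2) fun ξ hξ => hg ξ (not_lt.mp fun h => hξ.2 ⟨hξ.1.1, h⟩),
    ← integral_Ioc_eq_integral_Ioo, ← integral_Ioc_eq_integral_Ioo,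
    ← intervalIntegral.integral_of_le hc.1.le, ← intervalIntegral.integral_of_le zero_le_one,
    intervalIntegral.integral_smul, intervalIntegral.smul_integral_comp_mul_add]
  congr 1 <;> ring

lemma integrableOn_Ioo_neg_one_one {g : ℝ → ℂ} {c : ℝ} (hc : -1 < c) (hg : ∀ ξ, c ≤ ξ → g ξ = 0)
    (hint : IntegrableOn (fun s => g ((1 + c) * s + -1)) (Set.Ioo 0 1)) :
    IntegrableOn g (Set.Ioo (-1) 1) := by
  have hc₀ : 1 + c ≠ 0 := by linarith
  rw [← intervalIntegrable_iff_integrableOn_Ioo_of_le zero_le_one] at hint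
  have hcomp := (hint.comp_mul_right (c := (1 + c)⁻¹)).comp_add_right 1
  simp only [zero_div, one_div, inv_inv, zero_sub, add_sub_cancel_left] at hcomp
  refine IntegrableOn.of_forall_sdiff_eq_zero (s := Set.Ioo (-1) c) ?_ measurableSet_Ioo
    fun ξ hξ => hg ξ (not_lt.mp fun h => hξ.2 ⟨hξ.1.1, h⟩)
  rw [← intervalIntegrable_iff_integrableOn_Ioo_of_le hc.le]
  refine hcomp.congr fun ξ _ => ?_
  congr 1
  field_simp
  ring

/-- `(1 + ξ) ^ σ` times the kernel of the Mehler-Dirichlet integral; it vanishes for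
`cos β ≤ ξ`, where the square root is the junk value `0`. -/
noncomputable def mehlerKernel (σ μ : ℂ) (ξ β : ℝ) : ℂ :=
  ((1 + ξ : ℝ) : ℂ) ^ σ * (Complex.cos (μ * β) * ((1 / √(2 * (cos β - ξ)) : ℝ) : ℂ))

lemma mehlerKernel_eq_zero (σ μ : ℂ) {ξ β : ℝ} (h : cos β ≤ ξ) : mehlerKernel σ μ ξ β = 0 := by
  rw [mehlerKernel, sqrt_eq_zero_of_nonpos (by linarith), div_zero, Complex.ofReal_zero, mul_zero,
    mul_zero]

lemma cos_mem_Ioc_neg_one_one {β : ℝ} (hβ : β ∈ Set.Ioo 0 π) : cos β ∈ Set.Ioc (-1) 1 :=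
  ⟨cos_pi ▸ cos_lt_cos_of_nonneg_of_le_pi hβ.1.le le_rfl hβ.2, cos_le_one β⟩

lemma one_add_cos_smul_mehlerKernel (σ μ : ℂ) {β s : ℝ} (hβ : β ∈ Set.Ioo 0 π) (hs : 0 ≤ s) :
    (1 + cos β) • mehlerKernel σ μ ((1 + cos β) * s + -1) β =
      ((1 / √2 : ℝ) : ℂ) * ((Complex.cos (μ * β) * ((1 + cos β : ℝ) : ℂ) ^ (σ + 1 / 2)) *
        ((s : ℂ) ^ σ * ((1 / √(1 - s) : ℝ) : ℂ))) := by
  have hb : 0 < 1 + cos β := by linarith [(cos_mem_Ioc_neg_one_one hβ).1]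
  have hcos : cos β - ((1 + cos β) * s + -1) = (1 + cos β) * (1 - s) := by ring
  rw [mehlerKernel, hcos, add_comm 1 (_ + -1), neg_add_cancel_right]
  set b := 1 + cos β
  have hb₀ : (b : ℂ) ≠ 0 := by exact_mod_cast hb.ne'
  have hsqrt : (b : ℂ) ^ (1 / 2 : ℂ) = ((√b : ℝ) : ℂ) := by
    rw [sqrt_eq_rpow, Complex.ofReal_cpow hb.le]
    norm_num
  have hmul : (b : ℂ) * ((√b : ℝ) : ℂ)⁻¹ = ((√b : ℝ) : ℂ) := by
    rw [← Complex.ofReal_inv, ← Complex.ofReal_mul, ← div_eq_mul_inv, div_sqrt]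
  rw [sqrt_mul two_pos.le, sqrt_mul hb.le, Complex.ofReal_mul,
    Complex.mul_cpow_ofReal_nonneg hb.le hs, Complex.cpow_add _ _ hb₀, Complex.real_smul, hsqrt,
    ← hmul]
  push_cast
  simp only [one_div, mul_inv]
  ring

lemma integrableOn_cos_mul_one_add_cos_cpow {a : ℂ} (ha : -1 < 2 * a.re) (μ : ℂ) :
    IntegrableOn (fun β : ℝ => Complex.cos (μ * β) * ((1 + cos β : ℝ) : ℂ) ^ a)
      (Set.Ioo 0 π) := by
  have ha' : -1 < (2 * a).re := by simpa using ha
  have hcircle := (intervalIntegrable_circleMap_cpow_mul_pow ha' 0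
    (norm_zero.trans_lt zero_lt_one)).mul_continuousOn (g := fun β : ℝ =>
      Complex.cos (μ * β) * (2 ^ (-a) * Complex.exp (-(a * β * Complex.I)))) (by fun_prop)
  have hsubset : Set.Ioo 0 π ⊆ Set.Ioc 0 (2 * π) := fun β hβ => ⟨hβ.1, by linarith [hβ.1, hβ.2]⟩
  refine (hcircle.1.mono_set hsubset).congr_fun (fun β hβ => ?_) measurableSet_Ioo
  have habs : |β| < π := by rw [abs_of_pos hβ.1]; exact hβ.2
  have hfactor := one_add_circleMap_cpow_mul_pow habs a 0
  have hexp := Complex.exp_ne_zero (a * β * Complex.I)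
  have htwo : (2 : ℂ) ^ a ≠ 0 := fun h => two_ne_zero ((Complex.cpow_eq_zero_iff _ _).mp h).1
  simp only [Nat.cast_zero, add_zero] at hfactor
  simp only [sub_zero, zero_mul, div_one, hfactor, div_self (circleMap_ne_center one_ne_zero)]
  rw [Complex.exp_neg, Complex.cpow_neg]
  field_simp

lemma integrableOn_cpow_mul_one_div_sqrt_one_sub {σ : ℂ} (hσ : -1 < σ.re) :
    IntegrableOn (fun s : ℝ => (s : ℂ) ^ σ * ((1 / √(1 - s) : ℝ) : ℂ)) (Set.Ioo 0 1) := by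
  refine (integrableOn_Ioo_abs_sub_rpow_mul_abs_sub_rpow hσ (q := -1 / 2) (by norm_num) 0 1).mono'
    (Measurable.aestronglyMeasurable (by fun_prop))
    ((ae_restrict_mem measurableSet_Ioo).mono fun s hs => le_of_eq ?_)
  rw [norm_mul, Complex.norm_cpow_eq_rpow_re_of_pos hs.1, Complex.norm_real, one_div_sqrt_eq_rpow,
    norm_of_nonneg (rpow_nonneg (sub_nonneg.mpr hs.2.le) _), sub_zero, abs_of_pos hs.1,
    abs_sub_comm, abs_of_pos (sub_pos.mpr hs.2)]

lemma neg_one_lt_two_mul_re_add_half {σ : ℂ} (hσ : -1 < σ.re) : -1 < 2 * (σ + 1 / 2).re := by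
  norm_num
  linarith

lemma integrable_mehlerKernel {σ : ℂ} (hσ : -1 < σ.re) (μ : ℂ) :
    Integrable (Function.uncurry (mehlerKernel σ μ))
      ((volume.restrict (Set.Ioo (-1) 1)).prod (volume.restrict (Set.Ioo 0 π))) := by
  have hmeas : Measurable (Function.uncurry (mehlerKernel σ μ)) := by
    unfold Function.uncurry mehlerKernel
    fun_prop
  have hre := neg_one_lt_two_mul_re_add_half hσ
  have hf := integrableOn_cos_mul_one_add_cos_cpow hre μ
  have hg := integrableOn_cpow_mul_one_div_sqrt_one_sub hσ
  refine (integrable_prod_iff' hmeas.aestronglyMeasurable).mpr ⟨?_, ?_⟩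
  · filter_upwards [ae_restrict_mem measurableSet_Ioo] with β hβ
    have hcos := (cos_mem_Ioc_neg_one_one hβ).1
    have hcos₀ : 1 + cos β ≠ 0 := by linarith
    refine integrableOn_Ioo_neg_one_one hcos (fun ξ => mehlerKernel_eq_zero σ μ)
      (IntegrableOn.congr_fun (((hg.const_mul (Complex.cos (μ * β) *
        ((1 + cos β : ℝ) : ℂ) ^ (σ + 1 / 2))).const_mul ((1 / √2 : ℝ) : ℂ)).smul (1 + cos β)⁻¹)
        (fun s hs => ?_) measurableSet_Ioo)
    exact inv_smul_eq_iff₀ hcos₀ |>.mpr (one_add_cos_smul_mehlerKernel σ μ hβ hs.1.le).symm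
  · refine IntegrableOn.congr_fun ((hf.norm.mul_const
      (∫ s in Set.Ioo (0 : ℝ) 1, ‖(s : ℂ) ^ σ * ((1 / √(1 - s) : ℝ) : ℂ)‖)).const_mul (1 / √2))
      (fun β hβ => ?_) measurableSet_Ioo
    have hcos := cos_mem_Ioc_neg_one_one hβ
    simp only [Function.uncurry]
    rw [setIntegral_Ioo_neg_one_one_eq hcos fun ξ hξ => by
        rw [mehlerKernel_eq_zero σ μ hξ, norm_zero],
      ← MeasureTheory.integral_const_mul, ← MeasureTheory.integral_const_mul]
    refine setIntegral_congr_fun measurableSet_Ioo fun s hs => ?_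
    have hnorm := congrArg norm (one_add_cos_smul_mehlerKernel σ μ hβ hs.1.le)
    rw [norm_smul, norm_mul, norm_mul, Complex.norm_real, norm_of_nonneg (by linarith [hcos.1]),
      norm_of_nonneg (by positivity)] at hnorm
    exact hnorm.symm

lemma cpow_mul_legendreP_eq_setIntegral_mehlerKernel (σ ν : ℂ) {ξ : ℝ}
    (hξ : ξ ∈ Set.Ioo (-1) 1) :
    ((1 + ξ : ℝ) : ℂ) ^ σ * legendreP ν ξ =
      ((2 / π : ℝ) : ℂ) * ∫ β in Set.Ioo 0 π, mehlerKernel σ (ν + 1 / 2) ξ β := by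
  simp only [mehlerKernel]
  rw [legendreP_eq_integral_Ioo_pi ν (Set.Ioo_subset_Ico_self hξ),
    MeasureTheory.integral_const_mul, mul_left_comm]

lemma integrableOn_cpow_mul_legendreP {σ : ℂ} (hσ : -1 < σ.re) (ν : ℂ) :
    IntegrableOn (fun ξ : ℝ => ((1 + ξ : ℝ) : ℂ) ^ σ * legendreP ν ξ) (Set.Ioo (-1) 1) :=
  IntegrableOn.congr_fun ((integrable_mehlerKernel hσ (ν + 1 / 2)).integral_prod_left.const_mul _)
    (fun _ hξ => (cpow_mul_legendreP_eq_setIntegral_mehlerKernel σ ν hξ).symm) measurableSet_Ioo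

lemma setIntegral_mehlerKernel_div_sub (σ μ : ℂ) (z : ℂ) {β : ℝ} (hβ : β ∈ Set.Ioo 0 π) :
    ∫ ξ in Set.Ioo (-1 : ℝ) 1, mehlerKernel σ μ ξ β * (z - ξ)⁻¹ =
      ∫ s in Set.Ioo (0 : ℝ) 1, ((1 / √2 : ℝ) : ℂ) *
        ((Complex.cos (μ * β) * ((1 + cos β : ℝ) : ℂ) ^ (σ + 1 / 2)) *
          ((s : ℂ) ^ σ * ((1 / √(1 - s) : ℝ) : ℂ)) *
            (1 + z - (s * (1 + cos β) : ℝ))⁻¹) := by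
  rw [setIntegral_Ioo_neg_one_one_eq (cos_mem_Ioc_neg_one_one hβ) fun ξ hξ => by
    rw [mehlerKernel_eq_zero σ μ hξ, zero_mul]]
  refine setIntegral_congr_fun measurableSet_Ioo fun s hs => ?_
  rw [← smul_mul_assoc, one_add_cos_smul_mehlerKernel σ μ hβ hs.1.le, mul_assoc]
  congr 3
  push_cast
  ring

lemma setIntegral_setIntegral_mehlerKernel_swap {σ z : ℂ} (hσ : -1 < σ.re) (μ : ℂ) (hz : z.im ≠ 0) :
    ∫ ξ in Set.Ioo (-1 : ℝ) 1, ∫ β in Set.Ioo 0 π, mehlerKernel σ μ ξ β * (z - ξ)⁻¹ =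
      ∫ s in Set.Ioo (0 : ℝ) 1, ((1 / √2 : ℝ) : ℂ) * ((s : ℂ) ^ σ * ((1 / √(1 - s) : ℝ) : ℂ)) *
        ∫ β in Set.Ioo 0 π, Complex.cos (μ * β) * ((1 + cos β : ℝ) : ℂ) ^ (σ + 1 / 2) /
          (1 + z - (s * (1 + cos β) : ℝ)) := by
  have hre := neg_one_lt_two_mul_re_add_half hσ
  have hz₁ : (1 + z).im ≠ 0 := by simpa using hz
  rw [integral_integral_swap, setIntegral_congr_fun measurableSet_Ioo fun β hβ =>
    setIntegral_mehlerKernel_div_sub σ μ z hβ, integral_integral_swap]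
  · congr 1 with s
    rw [← MeasureTheory.integral_const_mul]
    congr 1 with β
    ring
  · exact (Integrable.mul_bdd (g := fun p : ℝ × ℝ => (1 + z - (p.2 * (1 + cos p.1) : ℝ))⁻¹)
      ((integrableOn_cos_mul_one_add_cos_cpow hre μ).mul_prod
        (integrableOn_cpow_mul_one_div_sqrt_one_sub hσ))
      (Measurable.aestronglyMeasurable (by fun_prop))
      (.of_forall fun p => norm_inv_sub_ofReal_le hz₁ _)).const_mul _
  · exact Integrable.mul_bdd (g := fun p : ℝ × ℝ => (z - (p.1 : ℂ))⁻¹)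
      (integrable_mehlerKernel hσ μ) (Measurable.aestronglyMeasurable (by fun_prop))
      (.of_forall fun p => norm_inv_sub_ofReal_le hz _)

theorem setIntegral_cpow_mul_legendreP_div_sub {ν z : ℂ} {n : ℕ} (hν : -1 < (ν - n).re)
    (hz : z.im ≠ 0) :
    ∫ ξ in Set.Ioo (-1 : ℝ) 1, ((1 + ξ : ℝ) : ℂ) ^ (ν - n) * legendreP ν ξ / (z - ξ) =
      2 * 2 ^ ν * ((1 + z) ^ (n + 1))⁻¹ * eulerIntegral ν z := by
  have hre := neg_one_lt_two_mul_re_add_half hν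
  have hμ : ν + 1 / 2 = ν - n + 1 / 2 + n := by ring
  have htwo : (2 : ℂ) ^ (ν + 1 / 2) = 2 ^ ν * ((√2 : ℝ) : ℂ) := by
    rw [Complex.cpow_add _ _ two_ne_zero, sqrt_eq_rpow, Complex.ofReal_cpow two_pos.le]
    norm_num
  have hsqrt : ((√2 : ℝ) : ℂ) ≠ 0 := by simp
  have hpi : (π : ℂ) ≠ 0 := by simp
  have hmehler : ∀ ξ ∈ Set.Ioo (-1 : ℝ) 1,
      ((1 + ξ : ℝ) : ℂ) ^ (ν - n) * legendreP ν ξ / (z - ξ) = ((2 / π : ℝ) : ℂ) *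
        ∫ β in Set.Ioo 0 π, mehlerKernel (ν - n) (ν + 1 / 2) ξ β * (z - ξ)⁻¹ := fun ξ hξ => by
    rw [cpow_mul_legendreP_eq_setIntegral_mehlerKernel _ ν hξ, MeasureTheory.integral_mul_const,
      div_eq_mul_inv, mul_assoc]
  rw [setIntegral_congr_fun measurableSet_Ioo hmehler, MeasureTheory.integral_const_mul,
    setIntegral_setIntegral_mehlerKernel_swap hν _ hz, eulerIntegral,
    ← MeasureTheory.integral_const_mul, ← MeasureTheory.integral_const_mul]
  refine setIntegral_congr_fun measurableSet_Ioo fun s hs => ?_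
  have hs₀ : (s : ℂ) ≠ 0 := by exact_mod_cast hs.1.ne'
  have hpow : (s : ℂ) ^ ν = s ^ (ν - n) * s ^ n := by
    rw [← Complex.cpow_natCast, ← Complex.cpow_add _ _ hs₀, sub_add_cancel]
  have hcauchy := setIntegral_cos_mul_one_add_cos_cpow_div hz hs.1.ne' hre n
  rw [← hμ, htwo] at hcauchy
  rw [hcauchy, eulerKernel, hpow, show -2 * (ν + 1 / 2) = -2 * ν - 1 by ring]
  push_cast
  field_simp

/-! ### Boundary values on the two sides of the cut -/

lemma tendsto_setIntegral_cpow_mul_legendreP_div_sub_above {ν : ℂ} {n : ℕ} (hν : -1 < (ν - n).re)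
    {x : ℝ} (hx : x ∈ Set.Ioo (-1) 1) :
    Tendsto (fun δ : ℝ => ∫ ξ in Set.Ioo (-1 : ℝ) 1,
        ((1 + ξ : ℝ) : ℂ) ^ (ν - n) * legendreP ν ξ / (x + δ * Complex.I - ξ)) (𝓝[>] 0)
      (𝓝 (2 * ((1 + x : ℝ) : ℂ) ^ (ν - n) * (hyperbolicMehler (ν + 1 / 2) x -
        Complex.I * circularMehler (-(ν + 1 / 2)) x))) := by
  have hre : -1 < ν.re := by
    rw [Complex.sub_re, Complex.natCast_re] at hν
    linarith [(Nat.cast_nonneg n : (0 : ℝ) ≤ n)]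
  have hx₀ : ((1 + x : ℝ) : ℂ) ≠ 0 := by exact_mod_cast (by linarith [hx.1] : 1 + x ≠ 0)
  have hfactor : Tendsto (fun δ : ℝ => 2 * (2 : ℂ) ^ ν * ((1 + (x + δ * Complex.I)) ^ (n + 1))⁻¹)
      (𝓝[>] 0) (𝓝 (2 * 2 ^ ν * (((1 + x : ℝ) : ℂ) ^ (n + 1))⁻¹)) := by
    have hcont : ContinuousAt
        (fun δ : ℝ => 2 * (2 : ℂ) ^ ν * ((1 + (x + δ * Complex.I)) ^ (n + 1))⁻¹) 0 :=
      continuousAt_const.mul (ContinuousAt.inv₀ (by fun_prop)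
        (pow_ne_zero _ (by simpa using hx₀)))
    simpa using hcont.tendsto.mono_left nhdsWithin_le_nhds
  have hvalue : 2 * 2 ^ ν * (((1 + x : ℝ) : ℂ) ^ (n + 1))⁻¹ * eulerIntegral ν x =
      2 * ((1 + x : ℝ) : ℂ) ^ (ν - n) * (hyperbolicMehler (ν + 1 / 2) x -
        Complex.I * circularMehler (-(ν + 1 / 2)) x) := by
    have htwo : (2 : ℂ) ^ ν ≠ 0 := fun h => two_ne_zero ((Complex.cpow_eq_zero_iff _ _).mp h).1
    have hpow : ((1 + x : ℝ) : ℂ) ^ (ν + 1) =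
        ((1 + x : ℝ) : ℂ) ^ (ν - n) * ((1 + x : ℝ) : ℂ) ^ (n + 1) := by
      rw [← Complex.cpow_natCast, ← Complex.cpow_add _ _ hx₀]
      congr 1
      push_cast
      ring
    rw [eulerIntegral_ofReal hre hx, hpow, Complex.cpow_neg]
    field_simp
  rw [← hvalue]
  refine (hfactor.mul (tendsto_eulerIntegral hre hx)).congr' ?_
  filter_upwards [self_mem_nhdsWithin] with δ hδ
  exact (setIntegral_cpow_mul_legendreP_div_sub hν (by simpa using hδ.ne')).symm

lemma conj_ofReal_cpow {r : ℝ} (hr : 0 ≤ r) (σ : ℂ) :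
    starRingEnd ℂ ((r : ℂ) ^ σ) = (r : ℂ) ^ starRingEnd ℂ σ := by
  have harg : (r : ℂ).arg ≠ π := by
    rw [Complex.arg_ofReal_of_nonneg hr]
    exact pi_ne_zero.symm
  rw [Complex.cpow_conj _ _ harg, Complex.conj_ofReal]

lemma conj_legendreP_conj (ν : ℂ) {x : ℝ} (hx : x ∈ Set.Ioo (-1) 1) :
    starRingEnd ℂ (legendreP (starRingEnd ℂ ν) x) = legendreP ν x := by
  have hμ : starRingEnd ℂ ν + 1 / 2 = starRingEnd ℂ (ν + 1 / 2) := by simp [map_ofNat]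
  rw [legendreP_eq_circularMehler _ hx, legendreP_eq_circularMehler _ hx, hμ, ← map_neg, map_mul,
    map_add, conj_circularMehler_conj, conj_circularMehler_conj, neg_neg, Complex.conj_ofReal,
    add_comm (circularMehler (-_) x)]

lemma tendsto_setIntegral_cpow_mul_legendreP_div_sub_below {ν : ℂ} {n : ℕ}
    (hν : -1 < (ν - n).re) {x : ℝ} (hx : x ∈ Set.Ioo (-1) 1) :
    Tendsto (fun δ : ℝ => ∫ ξ in Set.Ioo (-1 : ℝ) 1,
        ((1 + ξ : ℝ) : ℂ) ^ (ν - n) * legendreP ν ξ / (x - δ * Complex.I - ξ)) (𝓝[>] 0)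
      (𝓝 (2 * ((1 + x : ℝ) : ℂ) ^ (ν - n) * (hyperbolicMehler (ν + 1 / 2) x +
        Complex.I * circularMehler (ν + 1 / 2) x))) := by
  have hconj : -1 < (starRingEnd ℂ ν - n).re := by simpa using hν
  have hσ : starRingEnd ℂ (starRingEnd ℂ ν - n) = ν - n := by simp
  have hμ : starRingEnd ℂ ν + 1 / 2 = starRingEnd ℂ (ν + 1 / 2) := by simp [map_ofNat]
  have hpow : ∀ ξ ∈ Set.Ioo (-1 : ℝ) 1, starRingEnd ℂ (((1 + ξ : ℝ) : ℂ) ^ (starRingEnd ℂ ν - n)) =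
      ((1 + ξ : ℝ) : ℂ) ^ (ν - n) := fun ξ hξ => by
    rw [conj_ofReal_cpow (by linarith [hξ.1]), hσ]
  have hlim := (Complex.continuous_conj.tendsto _).comp
    (tendsto_setIntegral_cpow_mul_legendreP_div_sub_above hconj hx)
  rw [map_mul, map_mul, hpow x hx, map_ofNat, map_sub, map_mul, Complex.conj_I, hμ,
    conj_hyperbolicMehler_conj, ← map_neg, conj_circularMehler_conj, neg_neg, neg_mul,
    sub_neg_eq_add] at hlim
  refine hlim.congr fun δ => ?_
  rw [Function.comp_apply, ← integral_conj]
  refine setIntegral_congr_fun measurableSet_Ioo fun ξ hξ => ?_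
  simp only [map_div₀, map_mul, map_sub, map_add, Complex.conj_ofReal, Complex.conj_I, mul_neg,
    hpow ξ hξ, conj_legendreP_conj ν hξ, ← sub_eq_add_neg]

lemma differentiableAt_cpow_mul_legendreP (σ ν : ℂ) {x : ℝ} (hx : x ∈ Set.Ioo (-1) 1) :
    DifferentiableAt ℝ (fun ξ : ℝ => ((1 + ξ : ℝ) : ℂ) ^ σ * legendreP ν ξ) x := by
  have hpow : DifferentiableAt ℂ (fun z : ℂ => (1 + z) ^ σ) x := by
    refine DifferentiableAt.cpow (by fun_prop) (by fun_prop) (.inl ?_)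
    simpa using neg_lt_iff_pos_add'.mp hx.1
  refine DifferentiableAt.mul ?_ (differentiableAt_legendreP ν hx)
  simpa using hpow.hasDerivAt.comp_ofReal.differentiableAt

/-- Generalized Neumann integral. -/
theorem stmt_19 (n : ℕ) (ν : ℂ) (hν : ∀ m : ℤ, ν ≠ (m : ℂ)) (hre : -1 < (ν - n).re)
    (x : ℝ) (hx : x ∈ Set.Ioo (-1:ℝ) 1) :
    Tendsto (fun ε : ℝ =>
        ∫ ξ in {ξ : ℝ | ξ ∈ Set.Ioo (-1:ℝ) 1 ∧ ε < |ξ - x|},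
          ((1 + ξ : ℝ) : ℂ) ^ (ν - n) * legendreP ν ξ / (2 * ((x - ξ : ℝ) : ℂ)))
      (𝓝[>] 0)
      (𝓝 (((1 + x : ℝ) : ℂ) ^ (ν - n) * legendreQ ν x)) := by
  have hν_re : -1 < ν.re := by
    rw [Complex.sub_re, Complex.natCast_re] at hre
    linarith [(Nat.cast_nonneg n : (0 : ℝ) ≤ n)]
  have hboundary := (tendsto_setIntegral_cpow_mul_legendreP_div_sub_above hre hx).add
    (tendsto_setIntegral_cpow_mul_legendreP_div_sub_below hre hx)
  rw [← mul_add, ← legendreQ_eq_hyperbolicMehler_add hν hν_re hx] at hboundary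
  have hpv := (tendsto_principalValue_of_tendsto_boundaryValues
    (integrableOn_cpow_mul_legendreP hre ν) (differentiableAt_cpow_mul_legendreP _ ν hx) hx
    (A := 2 * (((1 + x : ℝ) : ℂ) ^ (ν - n) * legendreQ ν x))
    (by convert hboundary using 2; ring)).const_mul (2⁻¹ : ℂ)
  rw [inv_mul_cancel_left₀ two_ne_zero] at hpv
  refine hpv.congr fun ε => ?_
  rw [← MeasureTheory.integral_const_mul]
  congr 1 with ξ
  ring
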